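/- arXiv:1302.2380 — 3 statements merged into one kernel-verified Lean document; each statement's English description precedes it below -/
import Mathlib

section
/- Let D₁, D₂, D₃, D₄ be closed metric disks in ℂ such that there is a bounded connected component U of ℂ \ (D₁ ∪ D₂ ∪ D₃ ∪ D₄) whose boundary decomposes as a union of four circular arcs, one from each of ∂D₁, ∂D₂, ∂D₃, ∂D₄, appearing in this cyclic order as ∂U is traversed positively. Then ∠(D₁,D₂) + ∠(D₂,D₃) + ∠(D₃,D₄) + ∠(D₄,D₁) < 2π. -/
open Metric Real

/-- The external intersection angle between two closed metric disks in `ℂ`,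
computed from centers and radii (tangent disks get angle `0`). -/
noncomputable def extAngle (c₁ : ℂ) (r₁ : ℝ) (c₂ : ℂ) (r₂ : ℝ) : ℝ :=
  Real.arccos ((dist c₁ c₂ ^ 2 - r₁ ^ 2 - r₂ ^ 2) / (2 * r₁ * r₂))


/-- A bounded open set containing `z₀` has no continuous branch of `log (y - z₀)` on its frontier. -/
theorem no_log_on_frontier (U : Set ℂ) (hbd : Bornology.IsBounded U) (z₀ : ℂ)
    (hz : z₀ ∈ U) (G : ℂ → ℂ) (hG : ContinuousOn G (frontier U))
    (hexp : ∀ y ∈ frontier U, Complex.exp (G y) = y - z₀) : False := by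
  classical
  obtain ⟨g, hg⟩ := ContinuousMap.exists_restrict_eq (s := frontier U) isClosed_frontier
    ⟨(frontier U).domRestrict G, continuousOn_iff_continuous_domRestrict.mp hG⟩
  have hgG : ∀ y ∈ frontier U, g y = G y := fun y hy => by
    have := congrArg (fun f => f ⟨y, hy⟩) hg
    simpa using this
  let H : ℂ → ℂ := fun y => if y ∈ U then Complex.exp (g y) else y - z₀
  have hHc : Continuous H := by
    refine Continuous.if ?_ (by fun_prop) (by fun_prop)
    intro a ha
    have ha' : a ∈ frontier U := ha
    rw [hgG a ha', hexp a ha']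
  have hH0 : ∀ y, H y ≠ 0 := by
    intro y
    by_cases hy : y ∈ U
    · simp only [H, hy, if_true]; exact Complex.exp_ne_zero _
    · simp only [H, hy, if_false]
      intro h
      rw [sub_eq_zero] at h
      exact hy (h ▸ hz)
  obtain ⟨f, hfc, hf⟩ := Complex.exists_continuousOn_eqOn_exp_comp (X := ℂ) (U := Set.univ) (g := H)
    (by
      have : ContractibleSpace (Set.univ : Set ℂ) :=
        Convex.contractibleSpace convex_univ ⟨0, trivial⟩
      exact SimplyConnectedSpace.ofContractible _) isOpen_univ hHc.continuousOn (by
      rintro ⟨y, -, hy⟩; exact hH0 y hy)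
  rw [continuousOn_univ] at hfc
  obtain ⟨R, hR⟩ := hbd.subset_ball z₀
  have hRpos : 0 < R := by
    have := hR hz; simpa using this
  let q : ℝ → ℂ := fun t => z₀ + R * Complex.exp (t * Complex.I)
  have hq : ∀ t, H (q t) = R * Complex.exp (t * Complex.I) := by
    intro t
    have : q t ∉ U := by
      intro h
      have := hR h
      simp [q, dist_eq_norm, Complex.norm_exp_ofReal_mul_I, abs_of_pos hRpos] at this
    simp only [H, this, if_false]
    simp [q]
  let d : ℝ → ℂ := fun t => f (q t) - t * Complex.I - Complex.log R
  have hdc : Continuous d := by fun_prop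
  have hR0 : (R : ℂ) ≠ 0 := by exact_mod_cast hRpos.ne'
  have hd : ∀ t, Complex.exp (d t) = 1 := by
    intro t
    have h1 : Complex.exp (f (q t)) = H (q t) := hf (Set.mem_univ _)
    simp only [d]
    rw [Complex.exp_sub, Complex.exp_sub, h1, hq, Complex.exp_log hR0]
    field_simp [Complex.exp_ne_zero]
  have hdn : ∀ t, ∃ n : ℤ, (d t).im / (2 * π) = n := by
    intro t
    obtain ⟨n, hn⟩ := Complex.exp_eq_one_iff.1 (hd t)
    refine ⟨n, ?_⟩
    rw [hn]
    have := Real.pi_pos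
    simp
  have hd1 : (d (2 * π)).im = (d 0).im - 2 * π := by
    have : q (2 * π) = q 0 := by
      simp [q]
    simp only [d, this]
    simp
    ring
  have hcont : Continuous fun t => (d t).im / (2 * π) := by fun_prop
  obtain ⟨n, hn⟩ := hdn 0
  have h2 : (d (2 * π)).im / (2 * π) = n - 1 := by
    rw [hd1, ← hn]; have := Real.pi_pos; field_simp
  have hmem : ((n : ℝ) - 1 / 2) ∈ Set.Icc ((d (2 * π)).im / (2 * π)) ((d 0).im / (2 * π)) := by
    rw [h2, hn]; constructor <;> linarith
  obtain ⟨t, -, ht⟩ := intermediate_value_Icc' (a := 0) (b := 2 * π) (by positivity)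
    hcont.continuousOn hmem
  obtain ⟨m, hm⟩ := hdn t
  have : (m : ℝ) = n - 1 / 2 := by rw [← hm]; exact ht
  have h3 : (2 * m : ℝ) = 2 * n - 1 := by linarith
  have h4 : 2 * m = 2 * n - 1 := by exact_mod_cast h3
  omega

/-- `t` is an argument of the nonzero complex number `w`. -/
def IsA (t : ℝ) (w : ℂ) : Prop := w ≠ 0 ∧ w = ‖w‖ * Complex.exp (t * Complex.I)

theorem IsA.mul {s t : ℝ} {v w : ℂ} (h1 : IsA s v) (h2 : IsA t w) : IsA (s + t) (v * w) := by
  refine ⟨mul_ne_zero h1.1 h2.1, ?_⟩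
  rw [norm_mul]
  push_cast
  rw [add_mul, Complex.exp_add]
  conv_lhs => rw [h1.2, h2.2]
  ring

theorem isA_arg {w : ℂ} (h : w ≠ 0) : IsA (Complex.arg w) w :=
  ⟨h, (Complex.norm_mul_exp_arg_mul_I w).symm⟩

theorem isA_neg_arg {w : ℂ} (h : w ≠ 0) : IsA (-Complex.arg w) w⁻¹ := by
  refine ⟨inv_ne_zero h, ?_⟩
  conv_lhs => rw [(isA_arg h).2]
  rw [mul_inv, ← Complex.exp_neg, norm_inv]
  push_cast
  ring_nf

theorem IsA.im {t : ℝ} {w : ℂ} (h : IsA t w) : w.im = ‖w‖ * Real.sin t := by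
  have := congrArg Complex.im h.2
  rw [Complex.exp_mul_I] at this
  simpa [← Complex.ofReal_sin, ← Complex.ofReal_cos] using this

theorem IsA.re {t : ℝ} {w : ℂ} (h : IsA t w) : w.re = ‖w‖ * Real.cos t := by
  have := congrArg Complex.re h.2
  rw [Complex.exp_mul_I] at this
  simpa [← Complex.ofReal_sin, ← Complex.ofReal_cos] using this

theorem IsA.one {t : ℝ} (h : IsA t 1) : ∃ n : ℤ, t = 2 * π * n := by
  have h1 : Real.cos t = 1 := by simpa using h.re.symm
  obtain ⟨n, hn⟩ := (Real.cos_eq_one_iff t).1 h1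
  exact ⟨n, by rw [← hn]; ring⟩

theorem re_conj_pos {r : ℝ} (hr : 0 < r) {c p z : ℂ} (hp : dist p c = r) (hz : r ≤ dist z c)
    (hne : z ≠ p) : 0 < ((p - z) / (c - z)).re := by
  have hcz : c - z ≠ 0 := by
    intro h
    rw [sub_eq_zero] at h
    rw [h, dist_self] at hz
    linarith
  have h1 : 0 < Complex.normSq (c - z) := Complex.normSq_pos.2 hcz
  have h2 : 0 < Complex.normSq (p - z) := Complex.normSq_pos.2 (sub_ne_zero.2 hne.symm)
  have h3 : Complex.normSq (p - c) ≤ Complex.normSq (c - z) := by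
    rw [Complex.normSq_eq_norm_sq, Complex.normSq_eq_norm_sq, ← dist_eq_norm, ← dist_eq_norm, hp,
      dist_comm c z]
    gcongr
  have h4 : (p - z).re * (c - z).re + (p - z).im * (c - z).im > 0 := by
    simp only [Complex.normSq_apply, Complex.sub_re, Complex.sub_im] at *
    nlinarith
  rw [Complex.div_re, ← add_div]
  exact div_pos h4 h1

theorem abs_arg_lt {r : ℝ} (hr : 0 < r) {c p z : ℂ} (hp : dist p c = r) (hz : r ≤ dist z c)
    (hne : z ≠ p) : |Complex.arg ((p - z) / (c - z))| < π / 2 :=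
  Complex.abs_arg_lt_pi_div_two_iff.2 (Or.inl (re_conj_pos hr hp hz hne))

theorem sin_pos_imp {a : ℝ} (h1 : -π < a) (h : 0 < Real.sin a) : 0 < a := by
  by_contra h2
  have := Real.sin_nonpos_of_nonpos_of_neg_pi_le (not_lt.1 h2) h1.le
  linarith

theorem real_tri {a b c D ka kb kc : ℝ} (ha1 : -π < a) (ha2 : a < π) (hb1 : -π < b) (hb2 : b < π)
    (hc1 : 0 < c) (hc2 : c < 2 * π) (hka : 0 < ka) (hkb : 0 < kb) (hkc : 0 < kc)
    (hsa : Real.sin a = ka * D) (hsb : Real.sin b = kb * D) (hsc : Real.sin c = kc * D)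
    (m : ℤ) (hm : a + b + c = π + 2 * π * m) : a + b + c = π := by
  have hpi := Real.pi_pos
  suffices h : m = 0 by rw [hm, h]; simp
  have key : ∀ x : ℤ, π * x < π * (2 * m + 1 : ℤ) → x < 2 * m + 1 := by
    intro x hx
    have := lt_of_mul_lt_mul_left hx hpi.le
    exact_mod_cast this
  have key' : ∀ x : ℤ, π * (2 * m + 1 : ℤ) < π * x → 2 * m + 1 < x := by
    intro x hx
    have := lt_of_mul_lt_mul_left hx hpi.le
    exact_mod_cast this
  have hm' : π * (2 * m + 1 : ℤ) = a + b + c := by rw [hm]; push_cast; ring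
  rcases lt_trichotomy D 0 with hD | hD | hD
  · have h1 : a < 0 := by
      have := sin_pos_imp (a := -a) (by linarith) (by rw [Real.sin_neg, hsa]; nlinarith)
      linarith
    have h2 : b < 0 := by
      have := sin_pos_imp (a := -b) (by linarith) (by rw [Real.sin_neg, hsb]; nlinarith)
      linarith
    have h3 : π < c := by
      by_contra h
      have := Real.sin_nonneg_of_nonneg_of_le_pi hc1.le (not_lt.1 h)
      nlinarith
    have h4 := key (-1) (by rw [hm']; push_cast; linarith)
    have h5 := key' 2 (by rw [hm']; push_cast; linarith)
    omega
  · rw [hD, mul_zero] at hsa hsb hsc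
    have h1 : a = 0 := (Real.sin_eq_zero_iff_of_lt_of_lt ha1 ha2).1 hsa
    have h2 : b = 0 := (Real.sin_eq_zero_iff_of_lt_of_lt hb1 hb2).1 hsb
    have h4 := key 0 (by rw [hm']; push_cast; linarith)
    have h5 := key' 2 (by rw [hm']; push_cast; linarith)
    omega
  · have h1 : 0 < a := sin_pos_imp ha1 (by rw [hsa]; positivity)
    have h2 : 0 < b := sin_pos_imp hb1 (by rw [hsb]; positivity)
    have h3 : c < π := by
      by_contra h
      have h6 := Real.sin_nonneg_of_nonneg_of_le_pi (x := c - π) (by linarith) (by linarith)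
      rw [Real.sin_sub_pi] at h6
      nlinarith
    have h4 := key 0 (by rw [hm']; push_cast; linarith)
    have h5 := key' 3 (by rw [hm']; push_cast; linarith)
    omega

theorem IsA.sin_div {t : ℝ} {u v : ℂ} (h : IsA t (u / v)) :
    ∃ k : ℝ, 0 < k ∧ Real.sin t = k * (u.im * v.re - u.re * v.im) := by
  have h0 := h.1
  have hu : u ≠ 0 := fun e => h0 (by simp [e])
  have hv : v ≠ 0 := fun e => h0 (by simp [e])
  have hn : 0 < ‖u / v‖ := norm_pos_iff.2 h0
  have hq : 0 < Complex.normSq v := Complex.normSq_pos.2 hv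
  refine ⟨1 / (‖u / v‖ * Complex.normSq v), by positivity, ?_⟩
  have := h.im
  rw [Complex.div_im] at this
  field_simp at this ⊢
  linarith

theorem tri {ε a b c : ℝ} {P Q R : ℂ} (hε : ε = 1 ∨ ε = -1) (hPQ : P ≠ Q) (hQR : Q ≠ R)
    (hPR : P ≠ R) (ha : IsA a ((R - P) / (Q - P))) (hb : IsA b ((Q - R) / (P - R)))
    (hc : IsA c ((P - Q) / (R - Q))) (ha1 : |a| < π) (hb1 : |b| < π) (hc1 : 0 < ε * c)
    (hc2 : ε * c < 2 * π) : ε * (a + b + c) = π := by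
  obtain ⟨n, hn⟩ : ∃ n : ℤ, a + b + c = π + 2 * π * n := by
    have h := (ha.mul hb).mul hc
    have e : (R - P) / (Q - P) * ((Q - R) / (P - R)) * ((P - Q) / (R - Q)) = -1 := by
      have := sub_ne_zero.2 hPQ.symm
      have := sub_ne_zero.2 hQR.symm
      have := sub_ne_zero.2 hPR
      field_simp
      ring
    rw [e] at h
    have h2 : IsA (-π) (-1) := by
      refine ⟨by simp, ?_⟩
      simp [Complex.exp_neg, Complex.exp_pi_mul_I]
    have h3 := h.mul h2
    norm_num at h3
    obtain ⟨n, hn⟩ := h3.one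
    exact ⟨n, by linarith⟩
  obtain ⟨ka, hka, hsa⟩ := ha.sin_div
  obtain ⟨kb, hkb, hsb⟩ := hb.sin_div
  obtain ⟨kc, hkc, hsc⟩ := hc.sin_div
  rw [abs_lt] at ha1 hb1
  set D := (R - P).im * (Q - P).re - (R - P).re * (Q - P).im with hD
  have hsb' : Real.sin b = kb * D := by
    rw [hsb, hD]; simp only [Complex.sub_re, Complex.sub_im]; ring
  have hsc' : Real.sin c = kc * D := by
    rw [hsc, hD]; simp only [Complex.sub_re, Complex.sub_im]; ring
  rcases hε with rfl | rfl
  · have := real_tri ha1.1 ha1.2 hb1.1 hb1.2 (by linarith) (by linarith) hka hkb hkc hsa hsb' hsc' n hn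
    linarith
  · have := real_tri (a := -a) (b := -b) (c := -c) (D := -D) (by linarith) (by linarith)
      (by linarith) (by linarith) (by linarith) (by linarith) hka hkb hkc
      (by rw [Real.sin_neg, hsa]; ring) (by rw [Real.sin_neg, hsb']; ring)
      (by rw [Real.sin_neg, hsc']; ring) (-n - 1) (by push_cast; linarith)
    linarith

/-- Angle from `c i` to `p i` seen from `z`. -/
noncomputable def angE (c p : Fin 4 → ℂ) (i : Fin 4) (z : ℂ) : ℝ :=
  Complex.arg ((p i - z) / (c i - z))

/-- Angle from `p i` to `c (i+1)` seen from `z`. -/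
noncomputable def angF (c p : Fin 4 → ℂ) (i : Fin 4) (z : ℂ) : ℝ :=
  -Complex.arg ((p i - z) / (c (i + 1) - z))

/-- Geometric hypotheses on disks and vertices. -/
structure Config (c p : Fin 4 → ℂ) (r : Fin 4 → ℝ) : Prop where
  hr : ∀ i, 0 < r i
  h1 : ∀ i, dist (p i) (c i) = r i
  h2 : ∀ i, dist (p i) (c (i + 1)) = r (i + 1)
  hout : ∀ i j, r i ≤ dist (p j) (c i)
  inj : Function.Injective p

theorem Config.E_lt {c p : Fin 4 → ℂ} {r : Fin 4 → ℝ} (h : Config c p r) (i : Fin 4) (z : ℂ)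
    (hz : r i ≤ dist z (c i)) (hne : z ≠ p i) : |angE c p i z| < π / 2 :=
  abs_arg_lt (h.hr i) (h.h1 i) hz hne

theorem Config.F_lt {c p : Fin 4 → ℂ} {r : Fin 4 → ℝ} (h : Config c p r) (i : Fin 4) (z : ℂ)
    (hz : r (i + 1) ≤ dist z (c (i + 1))) (hne : z ≠ p i) : |angF c p i z| < π / 2 := by
  rw [angF, abs_neg]
  exact abs_arg_lt (h.hr (i + 1)) (h.h2 i) hz hne

theorem ne_of_out {r : ℝ} (hr : 0 < r) {c z : ℂ} (hz : r ≤ dist z c) : c - z ≠ 0 := by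
  intro h
  rw [sub_eq_zero] at h
  rw [h, dist_self] at hz
  linarith

theorem Config.E_isA {c p : Fin 4 → ℂ} {r : Fin 4 → ℝ} (h : Config c p r) (i : Fin 4) (z : ℂ)
    (hz : r i ≤ dist z (c i)) (hne : z ≠ p i) : IsA (angE c p i z) ((p i - z) / (c i - z)) :=
  isA_arg (div_ne_zero (sub_ne_zero.2 hne.symm) (ne_of_out (h.hr i) hz))

theorem Config.F_isA {c p : Fin 4 → ℂ} {r : Fin 4 → ℝ} (h : Config c p r) (i : Fin 4) (z : ℂ)
    (hz : r (i + 1) ≤ dist z (c (i + 1))) (hne : z ≠ p i) :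
    IsA (angF c p i z) ((c (i + 1) - z) / (p i - z)) := by
  have := isA_neg_arg (div_ne_zero (sub_ne_zero.2 hne.symm) (ne_of_out (h.hr (i + 1)) hz))
  rwa [inv_div] at this

/-- angle of the chord from `p i` to `p (i+1)` seen from `z`. -/
noncomputable def angX (c p : Fin 4 → ℂ) (i : Fin 4) (z : ℂ) : ℝ :=
  angF c p i z + angE c p (i + 1) z

theorem Config.X_lt {c p : Fin 4 → ℂ} {r : Fin 4 → ℝ} (h : Config c p r) (i : Fin 4) (z : ℂ)
    (hz : r (i + 1) ≤ dist z (c (i + 1))) (hne : z ≠ p i) (hne' : z ≠ p (i + 1)) :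
    |angX c p i z| < π := by
  have h1 := h.F_lt i z hz hne
  have h2 := h.E_lt (i + 1) z hz hne'
  have := abs_add_le (angF c p i z) (angE c p (i + 1) z)
  rw [angX]; linarith

theorem Config.X_isA {c p : Fin 4 → ℂ} {r : Fin 4 → ℝ} (h : Config c p r) (i : Fin 4) (z : ℂ)
    (hz : r (i + 1) ≤ dist z (c (i + 1))) (hne : z ≠ p i) (hne' : z ≠ p (i + 1)) :
    IsA (angX c p i z) ((p (i + 1) - z) / (p i - z)) := by
  have h1 := h.F_isA i z hz hne
  have h2 := h.E_isA (i + 1) z hz hne'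
  have h3 := h1.mul h2
  have e : (c (i + 1) - z) / (p i - z) * ((p (i + 1) - z) / (c (i + 1) - z))
      = (p (i + 1) - z) / (p i - z) := by
    have := ne_of_out (h.hr (i + 1)) hz
    field_simp
  rwa [e] at h3

/-- The part of the total angle at `z` not coming from the vertex `j`. -/
noncomputable def angT (c p : Fin 4 → ℂ) (j : Fin 4) (z : ℂ) : ℝ :=
  angE c p (j + 1) z + angF c p (j + 1) z + angE c p (j + 2) z + angF c p (j + 2) z
    + angE c p (j + 3) z + angF c p (j + 3) z

theorem Config.core {c p : Fin 4 → ℂ} {r : Fin 4 → ℝ} (h : Config c p r) {ε : ℝ}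
    (hε : ε = 1 ∨ ε = -1) (hT : ∀ j, |2 * π * ε - angT c p j (p j)| ≤ π) :
    2 * π < ∑ j, (2 * π - ε * angT c p j (p j)) := by
  have hpi := Real.pi_pos
  have i12 : ∀ j : Fin 4, j + 1 + 1 = j + 2 := by decide
  have i13 : ∀ j : Fin 4, j + 1 + 2 = j + 3 := by decide
  have i21 : ∀ j : Fin 4, j + 2 + 1 = j + 3 := by decide
  have i22 : ∀ j : Fin 4, j + 2 + 2 = j := by decide
  have i23 : ∀ j : Fin 4, j + 2 + 3 = j + 1 := by decide
  have i14 : ∀ j : Fin 4, j + 1 + 3 = j := by decide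
  have i31 : ∀ j : Fin 4, j + 3 + 1 = j := by decide
  have n1 : ∀ j : Fin 4, j ≠ j + 1 := by decide
  have n2 : ∀ j : Fin 4, j ≠ j + 2 := by decide
  have n3 : ∀ j : Fin 4, j ≠ j + 3 := by decide
  have n12 : ∀ j : Fin 4, j + 1 ≠ j + 2 := by decide
  have n13 : ∀ j : Fin 4, j + 1 ≠ j + 3 := by decide
  let X : Fin 4 → ℝ := fun j => angX c p (j + 1) (p j) + angX c p (j + 2) (p j)
  have hTX : ∀ j, angT c p j (p j) = angE c p (j + 1) (p j) + X j + angF c p (j + 3) (p j) := by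
    intro j; simp only [angT, X, angX, i12, i21]; ring
  have hE : ∀ j, |angE c p (j + 1) (p j)| < π / 2 := fun j =>
    h.E_lt _ _ (h.hout _ _) (h.inj.ne (n1 j))
  have hF : ∀ j, |angF c p (j + 3) (p j)| < π / 2 := fun j =>
    h.F_lt _ _ (h.hout _ _) (h.inj.ne (n3 j))
  have hA : ∀ j, |angX c p (j + 1) (p j)| < π := fun j =>
    h.X_lt _ _ (h.hout _ _) (h.inj.ne (n1 j)) (by rw [i12]; exact h.inj.ne (n2 j))
  have hB : ∀ j, |angX c p (j + 2) (p j)| < π := fun j =>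
    h.X_lt _ _ (h.hout _ _) (h.inj.ne (n2 j)) (by rw [i21]; exact h.inj.ne (n3 j))
  have hAi : ∀ j, IsA (angX c p (j + 1) (p j)) ((p (j + 2) - p j) / (p (j + 1) - p j)) := fun j => by
    have := h.X_isA (j + 1) (p j) (h.hout _ _) (h.inj.ne (n1 j)) (by rw [i12]; exact h.inj.ne (n2 j))
    rwa [i12] at this
  have hBi : ∀ j, IsA (angX c p (j + 2) (p j)) ((p (j + 3) - p j) / (p (j + 2) - p j)) := fun j => by
    have := h.X_isA (j + 2) (p j) (h.hout _ _) (h.inj.ne (n2 j)) (by rw [i21]; exact h.inj.ne (n3 j))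
    rwa [i21] at this
  have hXi : ∀ j, IsA (X j) ((p (j + 3) - p j) / (p (j + 1) - p j)) := fun j => by
    have := (hAi j).mul (hBi j)
    have e : (p (j + 2) - p j) / (p (j + 1) - p j) * ((p (j + 3) - p j) / (p (j + 2) - p j))
      = (p (j + 3) - p j) / (p (j + 1) - p j) := by
      have := sub_ne_zero.2 (h.inj.ne (n2 j)).symm
      field_simp
    rwa [e] at this
  have hX : ∀ j, 0 < ε * X j ∧ ε * X j < 2 * π := by
    intro j
    have a1 := abs_lt.1 (hE j)
    have a2 := abs_lt.1 (hF j)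
    have a3 := abs_lt.1 (hA j)
    have a4 := abs_lt.1 (hB j)
    have a5 := abs_le.1 (hT j)
    rw [hTX] at a5
    have a6 : X j = angX c p (j + 1) (p j) + angX c p (j + 2) (p j) := rfl
    rcases hε with rfl | rfl <;> constructor <;> linarith
  have htri : ∀ j, ε * (angX c p (j + 1) (p j) + angX c p (j + 2 + 2) (p (j + 2)) + X (j + 1)) = π := by
    intro j
    refine tri (P := p j) (Q := p (j + 1)) (R := p (j + 2)) hε (h.inj.ne (n1 j)) (h.inj.ne (n12 j))
      (h.inj.ne (n2 j)) (hAi j) ?_ ?_ (hA j) (hB _) (hX _).1 (hX _).2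
    · have := hBi (j + 2)
      rw [i22] at this ⊢
      rwa [i23] at this
    · have := hXi (j + 1)
      rwa [i14, i12] at this
  have hsum : ε * ∑ j, X j = 2 * π := by
    have t0 := htri 0
    have t1 := htri 1
    have t2 := htri 2
    have t3 := htri 3
    simp only [X, Fin.sum_univ_four] at *
    norm_num at t0 t1 t2 t3 ⊢
    have e1 : (3 : Fin 4) + 1 = 0 := rfl
    have e2 : (3 : Fin 4) + 2 = 1 := rfl
    have e3 : (2 : Fin 4) + 2 = 0 := rfl
    have e4 : (1 : Fin 4) + 3 = 0 := rfl
    have e5 : (2 : Fin 4) + 3 = 1 := rfl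
    have e6 : (1 : Fin 4) + 2 = 3 := rfl
    have e7 : (2 : Fin 4) + 1 = 3 := rfl
    have e8 : (1 : Fin 4) + 1 = 2 := rfl
    simp only [e1, e2, e3, e6, e7, e8, zero_add] at t0 t1 t2 t3 ⊢
    linarith
  have hfin : ∀ j, π - ε * X j < 2 * π - ε * angT c p j (p j) := by
    intro j
    have a1 := abs_lt.1 (hE j)
    have a2 := abs_lt.1 (hF j)
    rw [hTX]
    rcases hε with rfl | rfl <;> linarith
  have := Finset.sum_lt_sum_of_nonempty (s := Finset.univ) Finset.univ_nonempty (fun j _ => hfin j)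
  rw [Finset.sum_sub_distrib, ← Finset.mul_sum, hsum] at this
  simp only [Finset.sum_const, Finset.card_univ, Fintype.card_fin, nsmul_eq_mul] at this
  push_cast at this
  linarith

theorem cont_arg {r : ℝ} (hr : 0 < r) {c p z : ℂ} (hp : dist p c = r) (hz : r ≤ dist z c)
    (hne : z ≠ p) : ContinuousAt (fun z => Complex.arg ((p - z) / (c - z))) z := by
  have h := re_conj_pos hr hp hz hne
  have h1 := ne_of_out hr hz
  refine ContinuousAt.comp (g := Complex.arg) (f := fun z => (p - z) / (c - z))
    (Complex.continuousAt_arg (Or.inl h)) ?_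
  exact ContinuousAt.div (by fun_prop) (by fun_prop) h1

theorem Config.E_cont {c p : Fin 4 → ℂ} {r : Fin 4 → ℝ} (h : Config c p r) (i : Fin 4) (z : ℂ)
    (hz : r i ≤ dist z (c i)) (hne : z ≠ p i) : ContinuousAt (angE c p i) z :=
  cont_arg (h.hr i) (h.h1 i) hz hne

theorem Config.F_cont {c p : Fin 4 → ℂ} {r : Fin 4 → ℝ} (h : Config c p r) (i : Fin 4) (z : ℂ)
    (hz : r (i + 1) ≤ dist z (c (i + 1))) (hne : z ≠ p i) : ContinuousAt (angF c p i) z :=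
  (cont_arg (h.hr (i + 1)) (h.h2 i) hz hne).neg

/-- Total angle of the octagon seen from `z`. -/
noncomputable def angW (c p : Fin 4 → ℂ) (z : ℂ) : ℝ := ∑ i, (angE c p i z + angF c p i z)

theorem angW_eq (c p : Fin 4 → ℂ) (j : Fin 4) (z : ℂ) :
    angW c p z = angE c p j z + angF c p j z + angT c p j z := by
  have e1 : (3 : Fin 4) + 1 = 0 := rfl
  have e2 : (3 : Fin 4) + 2 = 1 := rfl
  have e3 : (2 : Fin 4) + 2 = 0 := rfl
  have e4 : (1 : Fin 4) + 3 = 0 := rfl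
  have e5 : (2 : Fin 4) + 3 = 1 := rfl
  have e6 : (1 : Fin 4) + 2 = 3 := rfl
  have e7 : (2 : Fin 4) + 1 = 3 := rfl
  have e8 : (1 : Fin 4) + 1 = 2 := rfl
  have e9 : (3 : Fin 4) + 3 = 2 := rfl
  rw [angW, Fin.sum_univ_four, angT]
  fin_cases j <;> simp [e1, e2, e3, e4, e5, e6, e7, e8, e9] <;> ring

theorem Config.W_val {c p : Fin 4 → ℂ} {r : Fin 4 → ℝ} (h : Config c p r) (z : ℂ)
    (hz : ∀ i, r i < dist z (c i)) : ∃ n : ℤ, angW c p z = 2 * π * n := by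
  have hne : ∀ i, z ≠ p i := fun i e => by
    have := hz i; rw [e, h.h1] at this; exact lt_irrefl _ this
  have hI : ∀ i, IsA (angE c p i z + angF c p i z) ((c (i + 1) - z) / (c i - z)) := by
    intro i
    have := (h.E_isA i z (hz i).le (hne i)).mul (h.F_isA i z (hz _).le (hne i))
    have e : (p i - z) / (c i - z) * ((c (i + 1) - z) / (p i - z))
        = (c (i + 1) - z) / (c i - z) := by
      have := sub_ne_zero.2 (hne i).symm
      field_simp
    rwa [e] at this
  have hh := (((hI 0).mul (hI 1)).mul (hI 2)).mul (hI 3)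
  have e1 : (3 : Fin 4) + 1 = 0 := rfl
  have e7 : (2 : Fin 4) + 1 = 3 := rfl
  have e8 : (1 : Fin 4) + 1 = 2 := rfl
  rw [zero_add, e8, e7, e1] at hh
  have e : (c 1 - z) / (c 0 - z) * ((c 2 - z) / (c 1 - z)) * ((c 3 - z) / (c 2 - z))
      * ((c 0 - z) / (c 3 - z)) = 1 := by
    have n0 := ne_of_out (h.hr 0) (hz 0).le
    have n1 := ne_of_out (h.hr 1) (hz 1).le
    have n2 := ne_of_out (h.hr 2) (hz 2).le
    have n3 := ne_of_out (h.hr 3) (hz 3).le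
    field_simp
  rw [e] at hh
  rw [angW, Fin.sum_univ_four]
  exact hh.one

theorem Config.W_lt {c p : Fin 4 → ℂ} {r : Fin 4 → ℝ} (h : Config c p r) (z : ℂ)
    (hz : ∀ i, r i < dist z (c i)) : |angW c p z| < 4 * π := by
  have hne : ∀ i, z ≠ p i := fun i e => by
    have := hz i; rw [e, h.h1] at this; exact lt_irrefl _ this
  have a := fun i => abs_lt.1 (h.E_lt i z (hz i).le (hne i))
  have b := fun i => abs_lt.1 (h.F_lt i z (hz _).le (hne i))
  rw [angW, Fin.sum_univ_four, abs_lt]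
  constructor <;> linarith [a 0, a 1, a 2, a 3, b 0, b 1, b 2, b 3]

theorem Config.W_ne_zero {c p : Fin 4 → ℂ} {r : Fin 4 → ℝ} (h : Config c p r) (U : Set ℂ)
    (hbd : Bornology.IsBounded U) (hcover : frontier U ⊆ ⋃ i, Metric.sphere (c i) (r i))
    (huniq : ∀ i, ∀ y ∈ frontier U, dist y (c i) = r i → dist y (c (i + 1)) = r (i + 1) → y = p i)
    (hopp : ∀ i, ∀ y ∈ frontier U, dist y (c i) = r i → dist y (c (i + 2)) = r (i + 2) → False)
    (z : ℂ) (hzU : z ∈ U) (hz : ∀ i, r i < dist z (c i)) : angW c p z ≠ 0 := by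
  classical
  intro hW
  have hn : ∀ i, c i - z ≠ 0 := fun i => ne_of_out (h.hr i) (hz i).le
  have hne : ∀ i y, dist y (c i) = r i → z ≠ y := fun i y hy e => by
    have := hz i; rw [e, hy] at this; exact lt_irrefl _ this
  let l : Fin 4 → ℂ → ℂ := fun i y => Complex.log ((y - z) / (c i - z))
  have hl : ∀ i y, dist y (c i) = r i → Complex.exp (l i y) = (y - z) / (c i - z) := fun i y hy =>
    Complex.exp_log (div_ne_zero (sub_ne_zero.2 (hne i y hy).symm) (hn i))
  have hlc : ∀ i y, dist y (c i) = r i → ContinuousAt (l i) y := by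
    intro i y hy
    refine ContinuousAt.clog (by fun_prop) (Or.inl (re_conj_pos (h.hr i) hy (hz i).le (hne i y hy)))
  let s : Fin 4 → ℂ := fun i => l i (p i) - l (i + 1) (p i)
  have hs : ∑ i, s i = 0 := by
    apply Complex.ext
    · have hre : ∀ i, (s i).re = Real.log ‖c (i + 1) - z‖ - Real.log ‖c i - z‖ := by
        intro i
        have hp := norm_ne_zero_iff.2 (sub_ne_zero.2 (hne i (p i) (h.h1 i)).symm)
        have h1 := norm_ne_zero_iff.2 (hn i)
        have h2 := norm_ne_zero_iff.2 (hn (i + 1))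
        simp only [s, l, Complex.sub_re, Complex.log_re, norm_div]
        rw [Real.log_div hp h1, Real.log_div hp h2]
        ring
      have e1 : (3 : Fin 4) + 1 = 0 := rfl
      have e7 : (2 : Fin 4) + 1 = 3 := rfl
      have e8 : (1 : Fin 4) + 1 = 2 := rfl
      rw [Fin.sum_univ_four]
      simp only [Complex.add_re, hre, e1, e7, e8, zero_add, Complex.zero_re]
      ring
    · have him : ∀ i, (s i).im = angE c p i z + angF c p i z := by
        intro i
        simp only [s, l, Complex.sub_im, Complex.log_im, angE, angF]
        ring
      rw [Complex.im_sum, Finset.sum_congr rfl (fun i _ => him i)]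
      exact hW
  let L : Fin 4 → ℂ := ![Complex.log (c 0 - z), Complex.log (c 0 - z) + s 0,
    Complex.log (c 0 - z) + s 0 + s 1, Complex.log (c 0 - z) + s 0 + s 1 + s 2]
  have hstep : ∀ i, L (i + 1) = L i + s i := by
    intro i
    rw [Fin.sum_univ_four] at hs
    fin_cases i
    · simp [L]
    · have e8 : (1 : Fin 4) + 1 = 2 := rfl
      simp [L, e8]
    · have e8 : (2 : Fin 4) + 1 = 3 := rfl
      simp [L, e8]
    · have e8 : (3 : Fin 4) + 1 = 0 := rfl
      simp [L, e8]
      linear_combination -hs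
  have hsexp : ∀ i, Complex.exp (s i) = (c (i + 1) - z) / (c i - z) := by
    intro i
    have h0 := sub_ne_zero.2 (hne i (p i) (h.h1 i)).symm
    have h1 := hn i
    have h2 := hn (i + 1)
    simp only [s]
    rw [Complex.exp_sub, hl i _ (h.h1 i), hl (i + 1) _ (h.h2 i)]
    field_simp
  have hLs : ∀ i, Complex.exp (L i) = c i - z → Complex.exp (L (i + 1)) = c (i + 1) - z := by
    intro i hi
    rw [hstep, Complex.exp_add, hi, hsexp]
    have h1 := hn i
    field_simp
  have hL0 : Complex.exp (L 0) = c 0 - z := by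
    simp [L, Complex.exp_log (hn 0)]
  have hL1 := hLs 0 hL0
  have hL2 := hLs 1 hL1
  have hL3 := hLs 2 hL2
  have hL : ∀ i, Complex.exp (L i) = c i - z := by
    intro i
    fin_cases i
    exacts [hL0, hL1, hL2, hL3]
  have hadj : ∀ i, ∀ y ∈ frontier U, dist y (c i) = r i → dist y (c (i + 1)) = r (i + 1) →
      L i + l i y = L (i + 1) + l (i + 1) y := by
    intro i y hy h1 h2
    rw [huniq i y hy h1 h2, hstep]
    simp only [s]
    ring
  have hcases : ∀ i j : Fin 4, j = i ∨ j = i + 1 ∨ i = j + 1 ∨ j = i + 2 := by decide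
  have hcons : ∀ i j, ∀ y ∈ frontier U, dist y (c i) = r i → dist y (c j) = r j →
      L i + l i y = L j + l j y := by
    intro i j y hy h1 h2
    rcases hcases i j with e | e | e | e
    · rw [e]
    · subst e; exact hadj i y hy h1 h2
    · subst e; exact (hadj j y hy h2 h1).symm
    · subst e; exact (hopp i y hy h1 h2).elim
  have hex : ∀ y ∈ frontier U, ∃ i, dist y (c i) = r i := by
    intro y hy
    exact Set.mem_iUnion.1 (hcover hy)
  let G : ℂ → ℂ := fun y => if hy : ∃ i, dist y (c i) = r i then L hy.choose + l hy.choose y else 0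
  have hG : ∀ i, ∀ y ∈ frontier U, dist y (c i) = r i → G y = L i + l i y := by
    intro i y hy h1
    have hy' : ∃ i, dist y (c i) = r i := ⟨i, h1⟩
    simp only [G, dif_pos hy']
    exact hcons _ _ y hy hy'.choose_spec h1
  refine no_log_on_frontier U hbd z hzU G ?_ ?_
  · have : frontier U = ⋃ i, frontier U ∩ Metric.sphere (c i) (r i) := by
      rw [← Set.inter_iUnion, Set.inter_eq_left.2 hcover]
    rw [this]
    refine (locallyFinite_of_finite _).continuousOn_iUnion
      (fun i => isClosed_frontier.inter Metric.isClosed_sphere) (fun i => ?_)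
    refine ContinuousOn.congr (f := fun y => L i + l i y) ?_ (fun y hy => hG i y hy.1 hy.2)
    intro y hy
    exact (continuousAt_const.add (hlc i y hy.2)).continuousWithinAt
  · intro y hy
    obtain ⟨i, hi⟩ := hex y hy
    rw [hG i y hy hi, Complex.exp_add, hL, hl i y hi]
    have h1 := hn i
    field_simp

theorem Config.vertex {c p : Fin 4 → ℂ} {r : Fin 4 → ℝ} (h : Config c p r) (U : Set ℂ)
    (hU : ∀ z ∈ U, ∀ i, r i < dist z (c i)) (ε : ℝ) (hW : ∀ z ∈ U, angW c p z = 2 * π * ε)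
    (hε : ε = 1 ∨ ε = -1) (j : Fin 4) (hpj : p j ∈ closure U) :
    |2 * π * ε - angT c p j (p j)| ≤ π ∧
      extAngle (c j) (r j) (c (j + 1)) (r (j + 1)) = π - |2 * π * ε - angT c p j (p j)| := by
  have n1 : ∀ j : Fin 4, j ≠ j + 1 := by decide
  have n2 : ∀ j : Fin 4, j ≠ j + 2 := by decide
  have n3 : ∀ j : Fin 4, j ≠ j + 3 := by decide
  have hne : ∀ z ∈ U, ∀ i, z ≠ p i := fun z hz i e => by
    have := hU z hz i; rw [e, h.h1] at this; exact lt_irrefl _ this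
  have hTc : ContinuousAt (angT c p j) (p j) := by
    have hE := fun i (hi : j ≠ i) => h.E_cont i (p j) (h.hout _ _) (h.inj.ne hi)
    have hF := fun i (hi : j ≠ i) => h.F_cont i (p j) (h.hout _ _) (h.inj.ne hi)
    exact (((((hE _ (n1 j)).add (hF _ (n1 j))).add (hE _ (n2 j))).add (hF _ (n2 j))).add
      (hE _ (n3 j))).add (hF _ (n3 j))
  let w : ℂ → ℂ := fun z => (c (j + 1) - z) / (c j - z)
  let D : ℂ → ℝ := fun z => 2 * π * ε - angT c p j z
  have hDc : ContinuousAt D (p j) := continuousAt_const.sub hTc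
  have hDψ : ∀ z ∈ U, D z = angE c p j z + angF c p j z := by
    intro z hz
    have := hW z hz
    rw [angW_eq c p j z] at this
    simp only [D]; linarith
  have hDlt : ∀ z ∈ U, |D z| ≤ π := by
    intro z hz
    rw [hDψ z hz]
    have a := h.E_lt j z (hU z hz j).le (hne z hz j)
    have b := h.F_lt j z (hU z hz _).le (hne z hz j)
    have := abs_add_le (angE c p j z) (angF c p j z)
    linarith
  have hcos : ∀ z ∈ U, Real.cos (D z) = (w z).re / ‖w z‖ := by
    intro z hz
    have := (h.E_isA j z (hU z hz j).le (hne z hz j)).mul (h.F_isA j z (hU z hz _).le (hne z hz j))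
    have e : (p j - z) / (c j - z) * ((c (j + 1) - z) / (p j - z)) = w z := by
      have := sub_ne_zero.2 (hne z hz j).symm
      simp only [w]
      field_simp
    rw [e, ← hDψ z hz] at this
    rw [this.re]
    have := norm_ne_zero_iff.2 this.1
    field_simp
  have q1 := ne_of_out (h.hr j) (h.hout j j)
  have q2 := ne_of_out (h.hr (j + 1)) (h.hout (j + 1) j)
  have hwc : ContinuousAt w (p j) := ContinuousAt.div (by fun_prop) (by fun_prop) q1
  have hw0 : w (p j) ≠ 0 := div_ne_zero q2 q1
  have hgc : ContinuousAt (fun z => (w z).re / ‖w z‖) (p j) :=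
    (Complex.continuous_re.continuousAt.comp hwc).div hwc.norm (norm_ne_zero_iff.2 hw0)
  haveI : (nhdsWithin (p j) U).NeBot := mem_closure_iff_nhdsWithin_neBot.1 hpj
  have hle : |D (p j)| ≤ π := by
    refine le_of_tendsto (hDc.abs.continuousWithinAt (s := U)).tendsto ?_
    filter_upwards [self_mem_nhdsWithin] with z hz using hDlt z hz
  have hceq : Real.cos (D (p j)) = (w (p j)).re / ‖w (p j)‖ := by
    have t1 := ((Real.continuous_cos.continuousAt.comp hDc).continuousWithinAt (s := U)).tendsto
    have t2 := (hgc.continuousWithinAt (s := U)).tendsto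
    refine tendsto_nhds_unique t1 (t2.congr' ?_)
    filter_upwards [self_mem_nhdsWithin] with z hz using (hcos z hz).symm
  refine ⟨hle, ?_⟩
  have hval : (dist (c j) (c (j + 1)) ^ 2 - r j ^ 2 - r (j + 1) ^ 2) / (2 * r j * r (j + 1))
      = -Real.cos |D (p j)| := by
    rw [Real.cos_abs, hceq]
    have d1 : ‖c j - p j‖ = r j := by rw [← dist_eq_norm, dist_comm]; exact h.h1 j
    have d2 : ‖c (j + 1) - p j‖ = r (j + 1) := by rw [← dist_eq_norm, dist_comm]; exact h.h2 j
    have s1 : Complex.normSq (c j - p j) = r j ^ 2 := by rw [Complex.normSq_eq_norm_sq, d1]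
    have s2 : Complex.normSq (c (j + 1) - p j) = r (j + 1) ^ 2 := by
      rw [Complex.normSq_eq_norm_sq, d2]
    have s3 : dist (c j) (c (j + 1)) ^ 2 = Complex.normSq (c j - c (j + 1)) := by
      rw [Complex.normSq_eq_norm_sq, dist_eq_norm]
    simp only [w, norm_div, d1, d2, Complex.div_re, s1]
    have r1 := h.hr j
    have r2 := h.hr (j + 1)
    rw [s3]
    field_simp
    rw [← s1, ← s2]
    simp only [Complex.normSq_apply, Complex.sub_re, Complex.sub_im]
    ring
  rw [extAngle, hval, Real.arccos_neg, Real.arccos_cos (abs_nonneg _) hle]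

theorem four_disk_quadrilateral_angle_sum_aux
    (c : Fin 4 → ℂ) (r : Fin 4 → ℝ) (hr : ∀ i, 0 < r i)
    (U : Set ℂ) (z₀ : ℂ)
    (hz₀ : z₀ ∈ (⋃ i, Metric.closedBall (c i) (r i))ᶜ)
    (hU : U = connectedComponentIn ((⋃ i, Metric.closedBall (c i) (r i))ᶜ) z₀)
    (hbd : Bornology.IsBounded U)
    (hcover : frontier U ⊆ ⋃ i, Metric.sphere (c i) (r i))
    (hopp02 : frontier U ∩ Metric.sphere (c 0) (r 0) ∩ Metric.sphere (c 2) (r 2) = ∅)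
    (hopp13 : frontier U ∩ Metric.sphere (c 1) (r 1) ∩ Metric.sphere (c 3) (r 3) = ∅)
    (hconsec : ∀ i : Fin 4, ∃! z : ℂ,
      z ∈ frontier U ∩ Metric.sphere (c i) (r i) ∩ Metric.sphere (c (i + 1)) (r (i + 1))) :
    ∑ i, extAngle (c i) (r i) (c (i + 1)) (r (i + 1)) < 2 * Real.pi := by
  have hpi := Real.pi_pos
  have hUsub : U ⊆ (⋃ i, Metric.closedBall (c i) (r i))ᶜ := by
    rw [hU]; exact connectedComponentIn_subset _ _
  have hUout : ∀ z ∈ U, ∀ i, r i < dist z (c i) := by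
    intro z hz i
    have := hUsub hz
    simp only [Set.mem_compl_iff, Set.mem_iUnion, Metric.mem_closedBall, not_exists, not_le] at this
    exact this i
  have hz₀U : z₀ ∈ U := by rw [hU]; exact mem_connectedComponentIn hz₀
  have hUpre : IsPreconnected U := by rw [hU]; exact isPreconnected_connectedComponentIn
  have hcl : ∀ y ∈ closure U, ∀ i, r i ≤ dist y (c i) := by
    intro y hy i
    have hc : IsClosed {y : ℂ | r i ≤ dist y (c i)} := isClosed_le (by fun_prop) (by fun_prop)
    exact closure_minimal (fun z hz => (hUout z hz i).le) hc hy
  have hopp : ∀ i, ∀ y ∈ frontier U, dist y (c i) = r i → dist y (c (i + 2)) = r (i + 2) →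
      False := by
    have f02 : ∀ y ∈ frontier U, dist y (c 0) = r 0 → dist y (c 2) = r 2 → False :=
      fun y hy h1 h2 => Set.eq_empty_iff_forall_notMem.1 hopp02 y ⟨⟨hy, h1⟩, h2⟩
    have f13 : ∀ y ∈ frontier U, dist y (c 1) = r 1 → dist y (c 3) = r 3 → False :=
      fun y hy h1 h2 => Set.eq_empty_iff_forall_notMem.1 hopp13 y ⟨⟨hy, h1⟩, h2⟩
    intro i y hy h1 h2
    fin_cases i
    exacts [f02 y hy h1 h2, f13 y hy h1 h2, f02 y hy h2 h1, f13 y hy h2 h1]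
  choose p hp huniq using hconsec
  have hpF : ∀ i, p i ∈ frontier U := fun i => (hp i).1.1
  have hp1 : ∀ i, dist (p i) (c i) = r i := fun i => (hp i).1.2
  have hp2 : ∀ i, dist (p i) (c (i + 1)) = r (i + 1) := fun i => (hp i).2
  have hcases : ∀ i j : Fin 4, j = i ∨ j = i + 1 ∨ i = j + 1 ∨ j = i + 2 := by decide
  have i12 : ∀ j : Fin 4, j + 1 + 1 = j + 2 := by decide
  have hinj : Function.Injective p := by
    have adj : ∀ i, p i ≠ p (i + 1) := by
      intro i e
      refine hopp i (p i) (hpF i) (hp1 i) ?_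
      have := hp2 (i + 1)
      rwa [← e, i12] at this
    intro i j e
    rcases hcases i j with h | h | h | h
    · exact h.symm
    · subst h; exact (adj i e).elim
    · subst h; exact (adj j e.symm).elim
    · subst h
      refine (hopp i (p i) (hpF i) (hp1 i) ?_).elim
      rw [e]; exact hp1 _
  have hC : Config c p r := ⟨hr, hp1, hp2, fun i j => hcl _ (frontier_subset_closure (hpF j)) i, hinj⟩
  have hW0 : ∀ z ∈ U, angW c p z ≠ 0 := fun z hz =>
    hC.W_ne_zero U hbd hcover (fun i y hy h1 h2 => huniq i y ⟨⟨hy, h1⟩, h2⟩) hopp z hz (hUout z hz)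
  have hWv : ∀ z ∈ U, angW c p z = 2 * π ∨ angW c p z = -(2 * π) := by
    intro z hz
    obtain ⟨n, hn⟩ := hC.W_val z (hUout z hz)
    have hlt := abs_lt.1 (hC.W_lt z (hUout z hz))
    have h0 := hW0 z hz
    rw [hn] at hlt h0
    have a1 : (n : ℝ) < 2 := by nlinarith [hlt.2]
    have a2 : (-2 : ℝ) < n := by nlinarith [hlt.1]
    have a3 : n ≠ 0 := by rintro rfl; simp at h0
    have b1 : n < 2 := by exact_mod_cast a1
    have b2 : -2 < n := by exact_mod_cast a2
    have : n = 1 ∨ n = -1 := by omega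
    rcases this with rfl | rfl
    · left; rw [hn]; simp
    · right; rw [hn]; simp
  have hWc : ContinuousOn (angW c p) U := by
    intro z hz
    have hne : ∀ i, z ≠ p i := fun i e => by
      have := hUout z hz i; rw [e, hp1] at this; exact lt_irrefl _ this
    refine ContinuousAt.continuousWithinAt ?_
    refine tendsto_finsetSum _ (fun i _ => ?_)
    exact (hC.E_cont i z (hUout z hz i).le (hne i)).add (hC.F_cont i z (hUout z hz _).le (hne i))
  have hWe : ∃ ε : ℝ, (ε = 1 ∨ ε = -1) ∧ ∀ z ∈ U, angW c p z = 2 * π * ε := by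
    have hno : ∀ a ∈ U, ∀ b ∈ U, angW c p a = -(2 * π) → angW c p b = 2 * π → False := by
      intro a ha b hb h1 h2
      obtain ⟨z, hz, hz0⟩ := hUpre.intermediate_value ha hb hWc
        (show (0 : ℝ) ∈ Set.Icc (angW c p a) (angW c p b) by rw [h1, h2]; constructor <;> linarith)
      exact hW0 z hz hz0
    rcases hWv z₀ hz₀U with h | h
    · refine ⟨1, Or.inl rfl, fun z hz => ?_⟩
      rcases hWv z hz with h' | h'
      · linarith
      · exact (hno z hz z₀ hz₀U h' h).elim
    · refine ⟨-1, Or.inr rfl, fun z hz => ?_⟩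
      rcases hWv z hz with h' | h'
      · exact (hno z₀ hz₀U z hz h h').elim
      · linarith
  obtain ⟨ε, hε, hWε⟩ := hWe
  have hv := fun j => hC.vertex U hUout ε hWε hε j (frontier_subset_closure (hpF j))
  have hcore := hC.core hε (fun j => (hv j).1)
  have hle : ∀ j, extAngle (c j) (r j) (c (j + 1)) (r (j + 1))
      ≤ π - (2 * π - ε * angT c p j (p j)) := by
    intro j
    rw [(hv j).2]
    have h1 := le_abs_self (2 * π * ε - angT c p j (p j))
    have h2 := neg_abs_le (2 * π * ε - angT c p j (p j))
    rcases hε with rfl | rfl <;> linarith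
  have := Finset.sum_le_sum (s := Finset.univ) (fun j _ => hle j)
  rw [Finset.sum_sub_distrib] at this
  simp only [Finset.sum_const, Finset.card_univ, Fintype.card_fin, nsmul_eq_mul] at this
  push_cast at this
  linarith

/-- **Four-disk quadrilateral angle bound.**  If `D₁, D₂, D₃, D₄` are closed metric
disks in `ℂ` and there is a bounded connected component `U` of the complement of their
union whose boundary is a curvilinear quadrilateral made of four circular arcs, one
from each `∂Dᵢ`, appearing in cyclic order (so that opposite arcs are disjoint and
consecutive arcs meet in exactly one point), then
`∠(D₁,D₂) + ∠(D₂,D₃) + ∠(D₃,D₄) + ∠(D₄,D₁) < 2π`. -/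
theorem four_disk_quadrilateral_angle_sum
    (c : Fin 4 → ℂ) (r : Fin 4 → ℝ) (hr : ∀ i, 0 < r i)
    (U : Set ℂ) (z₀ : ℂ)
    (hz₀ : z₀ ∈ (⋃ i, Metric.closedBall (c i) (r i))ᶜ)
    (hU : U = connectedComponentIn ((⋃ i, Metric.closedBall (c i) (r i))ᶜ) z₀)
    (hbd : Bornology.IsBounded U)
    (hcover : frontier U ⊆ ⋃ i, Metric.sphere (c i) (r i))
    (harc : ∀ i, (frontier U ∩ Metric.sphere (c i) (r i)).Nonempty)
    (hopp02 : frontier U ∩ Metric.sphere (c 0) (r 0) ∩ Metric.sphere (c 2) (r 2) = ∅)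
    (hopp13 : frontier U ∩ Metric.sphere (c 1) (r 1) ∩ Metric.sphere (c 3) (r 3) = ∅)
    (hconsec : ∀ i : Fin 4, ∃! z : ℂ,
      z ∈ frontier U ∩ Metric.sphere (c i) (r i) ∩ Metric.sphere (c (i + 1)) (r (i + 1))) :
    extAngle (c 0) (r 0) (c 1) (r 1) + extAngle (c 1) (r 1) (c 2) (r 2)
      + extAngle (c 2) (r 2) (c 3) (r 3) + extAngle (c 3) (r 3) (c 0) (r 0)
      < 2 * Real.pi := by
  have h := four_disk_quadrilateral_angle_sum_aux c r hr U z₀ hz₀ hU hbd hcover hopp02 hopp13 hconsec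
  rw [Fin.sum_univ_four] at h
  exact h
end

section
/- Let A, B, C be closed disks in ℂ, none of which is contained in any other. Suppose A and C overlap (their interiors meet) and A ∩ C ⊆ B. Then A and B overlap, and ∠(A,C) < ∠(A,B). -/
open Metric Real

lemma mono_aux (u v s t r R : ℝ) (hs : 0 < s) (ht : 0 < t) (hr : 0 < r) (hR : 0 < R)
    (h1 : R^2 = t^2 + u^2) (h2 : r^2 = s^2 + v^2) (h : u * r ≤ v * R) : s * u ≤ t * v := by
  rcases le_or_gt u 0 with hu | hu
  · rcases le_or_gt 0 v with hv | hv
    · nlinarith [mul_nonneg ht.le hv, mul_nonneg hs.le (neg_nonneg.2 hu)]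
    · have h3 : ((-v) * R)^2 ≤ ((-u) * r)^2 := by
        apply pow_le_pow_left₀ (mul_nonneg (by linarith) hR.le); linarith
      have h4 : (t * (-v))^2 ≤ (s * (-u))^2 := by
        have e1 : ((-v) * R)^2 = v^2 * R^2 := by ring
        have e2 : ((-u) * r)^2 = u^2 * r^2 := by ring
        rw [e1, e2, h1, h2] at h3
        nlinarith
      have := abs_le_of_sq_le_sq' h4 (mul_nonneg hs.le (by linarith))
      linarith [this.2]
  · have hv : 0 < v := by
      by_contra hv
      nlinarith [mul_pos hu hr, mul_nonneg (neg_nonneg.2 (not_lt.1 hv)) hR.le]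
    have h3 : (u * r)^2 ≤ (v * R)^2 := pow_le_pow_left₀ (mul_pos hu hr).le h 2
    have h4 : (s * u)^2 ≤ (t * v)^2 := by
      rw [mul_pow, mul_pow, h1, h2] at h3
      nlinarith
    exact (abs_le_of_sq_le_sq' h4 (mul_pos ht hv).le).2

/-- normalized sign lemma -/
lemma sign_aux (x y s t : ℝ) (hs : 0 < s) (ht : 0 < t) (hs2 : s^2 = 1 - x^2)
    (ht2 : t^2 = 1 - y^2) (hxy : 0 ≤ x + y) : x * y - s * t < y := by
  have hx1 : x < 1 := by nlinarith
  have hx0 : -1 < x := by nlinarith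
  rcases le_or_gt 0 y with hy | hy
  · nlinarith [mul_pos hs ht, mul_nonneg hy (sub_nonneg.2 hx1.le)]
  · have h : ((-y) * (1 - x))^2 < (s * t)^2 := by
      rw [mul_pow s t, hs2, ht2]
      have h1 : 0 < 1 + x - 2 * y^2 := by
        nlinarith [mul_nonneg hxy (by linarith : 0 ≤ x - y)]
      nlinarith [mul_pos h1 (sub_pos.2 hx1)]
    have := (abs_lt_of_sq_lt_sq' h (mul_pos hs ht).le).2
    linarith

lemma sign_aux2 (m n s t b c X : ℝ) (hb : 0 < b) (hc : 0 < c) (hs : 0 < s) (ht : 0 < t)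
    (hs2 : s^2 = c^2 - m^2) (ht2 : t^2 = b^2 - n^2) (h1 : n * c ≤ X) (h2 : - X < m * b) :
    m * n - s * t < X := by
  have es : (s / c)^2 = 1 - (m / c)^2 := by field_simp; linarith
  have et : (t / b)^2 = 1 - (n / b)^2 := by field_simp; linarith
  rcases le_or_gt 0 (m / c + n / b) with h | h
  · have := sign_aux (m / c) (n / b) (s / c) (t / b) (by positivity) (by positivity) es et h
    have e : m * n - s * t = (m / c * (n / b) - s / c * (t / b)) * (b * c) := by field_simp
    have e' : n * c = n / b * (b * c) := by field_simp
    rw [e]; rw [e'] at h1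
    exact lt_of_lt_of_le (mul_lt_mul_of_pos_right this (by positivity)) h1
  · have := sign_aux (-(n / b)) (-(m / c)) (t / b) (s / c) (by positivity) (by positivity)
      (by rw [et]; ring) (by rw [es]; ring) (by linarith)
    have e : m * n - s * t = (m / c * (n / b) - s / c * (t / b)) * (b * c) := by field_simp
    have e' : m * b = m / c * (b * c) := by field_simp
    rw [e]; rw [e'] at h2
    have h3 : m / c * (n / b) - s / c * (t / b) < -(m / c) := by linarith
    have := mul_lt_mul_of_pos_right h3 (show 0 < b * c by positivity)
    linarith

set_option maxHeartbeats 2000000 in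
lemma core (b1 b2 c1 c2 b c r R : ℝ) (hr : 0 < r) (hR : 0 < R) (hb : 0 < b) (hc : 0 < c)
    (hb2 : b^2 = b1^2 + b2^2) (hc2 : c^2 = c1^2 + c2^2)
    (hbR : |1 - R| < b) (hbR' : b < 1 + R) (hcr : |1 - r| < c) (hcr' : c < 1 + r)
    (h : ∀ x y : ℝ, x^2 + y^2 ≤ 1 → (x - c1)^2 + (y - c2)^2 ≤ r^2 →
      (x - b1)^2 + (y - b2)^2 ≤ R^2)
    (hK : (c^2 - 1 - r^2) * R ≤ (b^2 - 1 - R^2) * r) :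
    ∀ x y : ℝ, (x - c1)^2 + (y - c2)^2 ≤ r^2 → (x - b1)^2 + (y - b2)^2 ≤ R^2 := by
  obtain ⟨hb3, hb4⟩ := abs_lt.1 hbR
  obtain ⟨hc3, hc4⟩ := abs_lt.1 hcr
  obtain ⟨m, hm⟩ : ∃ m, m = (1 + c^2 - r^2) / 2 := ⟨_, rfl⟩
  obtain ⟨n, hn⟩ : ∃ n, n = (1 + b^2 - R^2) / 2 := ⟨_, rfl⟩
  have hs0 : 0 < c^2 - m^2 := by
    have h1 : 0 < ((1 + c) - r) * ((1 + c) + r) := mul_pos (by linarith) (by linarith)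
    have h2 : 0 < (r - (1 - c)) * (r + (1 - c)) := mul_pos (by linarith) (by linarith)
    have := mul_pos h1 h2
    rw [hm]; nlinarith
  have ht0 : 0 < b^2 - n^2 := by
    have h1 : 0 < ((1 + b) - R) * ((1 + b) + R) := mul_pos (by linarith) (by linarith)
    have h2 : 0 < (R - (1 - b)) * (R + (1 - b)) := mul_pos (by linarith) (by linarith)
    have := mul_pos h1 h2
    rw [hn]; nlinarith
  obtain ⟨s, hs⟩ : ∃ s, s = √(c^2 - m^2) := ⟨_, rfl⟩
  obtain ⟨t, ht⟩ : ∃ t, t = √(b^2 - n^2) := ⟨_, rfl⟩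
  have hs2 : s^2 = c^2 - m^2 := by rw [hs]; exact Real.sq_sqrt hs0.le
  have ht2 : t^2 = b^2 - n^2 := by rw [ht]; exact Real.sq_sqrt ht0.le
  have hsp : 0 < s := by rw [hs]; exact Real.sqrt_pos.2 hs0
  have htp : 0 < t := by rw [ht]; exact Real.sqrt_pos.2 ht0
  have hmc := abs_lt_of_sq_lt_sq' (show m^2 < c^2 by linarith) hc.le
  have hnb := abs_lt_of_sq_lt_sq' (show n^2 < b^2 by linarith) hb.le
  -- arc condition
  have arc : ∀ x y : ℝ, x^2 + y^2 = 1 → m ≤ x * c1 + y * c2 → n ≤ x * b1 + y * b2 := by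
    intro x y hxy hm'
    have := h x y hxy.le (by nlinarith)
    nlinarith
  obtain ⟨X, hX⟩ : ∃ X, X = b1 * c1 + b2 * c2 := ⟨_, rfl⟩
  obtain ⟨D, hD⟩ : ∃ D, D = b2 * c1 - b1 * c2 := ⟨_, rfl⟩
  have hXD : X^2 + D^2 = b^2 * c^2 := by rw [hX, hD, hb2, hc2]; ring
  have hcc : 0 < c^2 := by positivity
  have hp : n * c^2 ≤ m * X + s * D := by
    have := arc ((m * c1 - s * c2) / c^2) ((m * c2 + s * c1) / c^2)
      (by
        have : (m * c1 - s * c2)^2 + (m * c2 + s * c1)^2 = (c^2)^2 := by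
          have : (m * c1 - s * c2)^2 + (m * c2 + s * c1)^2 = (m^2 + s^2) * (c1^2 + c2^2) := by ring
          rw [this, hs2, ← hc2]; ring
        rw [div_pow, div_pow, ← add_div, this, div_self (by positivity)])
      (le_of_eq (by
        have : (m * c1 - s * c2) / c^2 * c1 + (m * c2 + s * c1) / c^2 * c2
          = m * (c1^2 + c2^2) / c^2 := by ring
        rw [this, ← hc2, mul_div_cancel_right₀ _ hcc.ne']))
    have e : (m * c1 - s * c2) / c^2 * b1 + (m * c2 + s * c1) / c^2 * b2
      = (m * X + s * D) / c^2 := by rw [hX, hD]; ring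
    rw [e, le_div_iff₀ hcc] at this
    exact this
  have hq : n * c^2 ≤ m * X - s * D := by
    have := arc ((m * c1 + s * c2) / c^2) ((m * c2 - s * c1) / c^2)
      (by
        have : (m * c1 + s * c2)^2 + (m * c2 - s * c1)^2 = (c^2)^2 := by
          have : (m * c1 + s * c2)^2 + (m * c2 - s * c1)^2 = (m^2 + s^2) * (c1^2 + c2^2) := by ring
          rw [this, hs2, ← hc2]; ring
        rw [div_pow, div_pow, ← add_div, this, div_self (by positivity)])
      (le_of_eq (by
        have : (m * c1 + s * c2) / c^2 * c1 + (m * c2 - s * c1) / c^2 * c2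
          = m * (c1^2 + c2^2) / c^2 := by ring
        rw [this, ← hc2, mul_div_cancel_right₀ _ hcc.ne']))
    have e : (m * c1 + s * c2) / c^2 * b1 + (m * c2 - s * c1) / c^2 * b2
      = (m * X - s * D) / c^2 := by rw [hX, hD]; ring
    rw [e, le_div_iff₀ hcc] at this
    exact this
  have hmid : n * c ≤ X := by
    have := arc (c1 / c) (c2 / c)
      (by rw [div_pow, div_pow, ← add_div, ← hc2, div_self hcc.ne'])
      (by
        have : c1 / c * c1 + c2 / c * c2 = (c1^2 + c2^2) / c := by ring
        rw [this, ← hc2, pow_two, mul_div_cancel_right₀ _ hc.ne']; exact hmc.2.le)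
    have e : c1 / c * b1 + c2 / c * b2 = X / c := by rw [hX]; ring
    rw [e, le_div_iff₀ hc] at this
    exact this
  have hanti : - X < m * b := by
    by_contra hcon
    have := arc (-b1 / b) (-b2 / b)
      (by rw [div_pow, div_pow, ← add_div, neg_sq, neg_sq, ← hb2, div_self (by positivity)])
      (by
        have : -b1 / b * c1 + -b2 / b * c2 = (-X) / b := by rw [hX]; ring
        rw [this, le_div_iff₀ hb]; linarith)
    have e : -b1 / b * b1 + -b2 / b * b2 = -(b1^2 + b2^2) / b := by ring
    rw [e, ← hb2, le_div_iff₀ hb] at this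
    nlinarith
  have hgt := sign_aux2 m n s t b c X hb hc hsp htp hs2 ht2 hmid hanti
  have hsq : (s * t)^2 ≤ (X - m * n)^2 := by
    have e : c^2 * ((X - m * n)^2 - (s * t)^2) = (m * X - n * c^2)^2 - (s * D)^2 := by
      rw [mul_pow s t, mul_pow s D, hs2, ht2, show D^2 = b^2 * c^2 - X^2 by linarith]; ring
    have h2 : 0 ≤ (m * X - n * c^2)^2 - (s * D)^2 := by
      have h9 : (m * X - n * c^2)^2 - (s * D)^2
        = (m * X + s * D - n * c^2) * (m * X - s * D - n * c^2) := by ring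
      rw [h9]
      exact mul_nonneg (sub_nonneg.2 hp) (sub_nonneg.2 hq)
    rw [← e] at h2
    have := nonneg_of_mul_nonneg_right h2 hcc
    linarith
  have hst := mul_pos hsp htp
  have hge : s * t ≤ X - m * n := by
    by_contra hcon
    have := sq_lt_sq' (show -(s * t) < X - m * n by linarith) (not_le.1 hcon)
    linarith
  obtain ⟨k, hk⟩ : ∃ k, k = s * n - t * m := ⟨_, rfl⟩
  obtain ⟨g1, hg1⟩ : ∃ g1, g1 = s * b1 - t * c1 := ⟨_, rfl⟩
  obtain ⟨g2, hg2⟩ : ∃ g2, g2 = s * b2 - t * c2 := ⟨_, rfl⟩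
  have hg : g1^2 + g2^2 ≤ k^2 := by
    have : g1^2 + g2^2 - k^2 = 2 * (s * t) * (s * t - (X - m * n)) := by
      have e : g1^2 + g2^2 - k^2 = s^2 * (b^2 - n^2) + t^2 * (c^2 - m^2)
        - 2 * (s * t) * (X - m * n) := by
        rw [hg1, hg2, hk, hX, hb2, hc2]; ring
      rw [e, ← hs2, ← ht2]; ring
    have h9 : 2 * (s * t) * (s * t - (X - m * n)) ≤ 0 :=
      mul_nonpos_of_nonneg_of_nonpos (by linarith) (by linarith)
    linarith
  have hk0 : k ≤ 0 := by
    by_contra hcon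
    push Not at hcon
    have e : k * c^2 ≤ m * (c1 * g1 + c2 * g2) := by
      have : m * (c1 * g1 + c2 * g2) = s * (m * X) - t * m * c^2 := by
        rw [hg1, hg2, hX, hc2]; ring
      rw [this, hk]
      have h8 : s * (n * c^2) ≤ s * (m * X) :=
        mul_le_mul_of_nonneg_left (by linarith) hsp.le
      have h9 : (s * n - t * m) * c^2 = s * (n * c^2) - t * m * c^2 := by ring
      linarith
    have e2 : (c1 * g1 + c2 * g2)^2 ≤ c^2 * k^2 := by
      have : (c1 * g1 + c2 * g2)^2 ≤ (c1^2 + c2^2) * (g1^2 + g2^2) := by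
        have h9 : (c1^2 + c2^2) * (g1^2 + g2^2)
          = (c1 * g1 + c2 * g2)^2 + (c1 * g2 - c2 * g1)^2 := by ring
        linarith [sq_nonneg (c1 * g2 - c2 * g1)]
      rw [← hc2] at this
      exact this.trans (mul_le_mul_of_nonneg_left hg hcc.le)
    have e3 : (k * c^2)^2 ≤ m^2 * (c^2 * k^2) := by
      calc (k * c^2)^2 ≤ (m * (c1 * g1 + c2 * g2))^2 := pow_le_pow_left₀ (by positivity) e 2
        _ = m^2 * (c1 * g1 + c2 * g2)^2 := by ring
        _ ≤ _ := mul_le_mul_of_nonneg_left e2 (sq_nonneg _)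
    have h8 : 0 < (c^2 * k^2) * (c^2 - m^2) := by positivity
    have h9 : (c^2 * k^2) * (c^2 - m^2) = (k * c^2)^2 - m^2 * (c^2 * k^2) := by ring
    linarith
  have hmono : s * (1 - n) ≤ t * (1 - m) := by
    apply mono_aux (1 - n) (1 - m) s t r R hsp htp hr hR
    · rw [ht2, hn]; ring
    · rw [hs2, hm]; ring
    · rw [hn, hm]; linarith
  intro x y hxy
  rcases le_or_gt (x^2 + y^2) 1 with ha | ha
  · exact h x y ha hxy
  have hL : k * (x^2 + y^2 + 1) / 2 ≤ x * g1 + y * g2 := by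
    have e1 : (-(x * g1 + y * g2))^2 ≤ ((-k) * (x^2 + y^2 + 1) / 2)^2 := by
      have a1 : (x * g1 + y * g2)^2 ≤ (x^2 + y^2) * (g1^2 + g2^2) := by
        have h9 : (x^2 + y^2) * (g1^2 + g2^2)
          = (x * g1 + y * g2)^2 + (x * g2 - y * g1)^2 := by ring
        linarith [sq_nonneg (x * g2 - y * g1)]
      have a2 : (x^2 + y^2) * (g1^2 + g2^2) ≤ (x^2 + y^2) * k^2 :=
        mul_le_mul_of_nonneg_left hg (by positivity)
      have h9 : ((-k) * (x^2 + y^2 + 1) / 2)^2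
        = (x^2 + y^2) * k^2 + k^2 * (x^2 + y^2 - 1)^2 / 4 := by ring
      rw [h9, neg_sq]
      linarith [mul_nonneg (sq_nonneg k) (sq_nonneg (x^2 + y^2 - 1))]
    have := (abs_le_of_sq_le_sq' e1 (by
      have : 0 ≤ (-k) * (x^2 + y^2 + 1) := mul_nonneg (by linarith) (by positivity)
      linarith)).2
    linarith
  have e : s * ((x - b1)^2 + (y - b2)^2 - R^2) = t * ((x - c1)^2 + (y - c2)^2 - r^2)
      + (s * (1 - n) - t * (1 - m)) * (x^2 + y^2 - 1)
      - 2 * (x * g1 + y * g2 - k * (x^2 + y^2 + 1) / 2) := by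
    have eR : R^2 = 1 + b1^2 + b2^2 - 2 * n := by rw [hn, hb2]; ring
    have er : r^2 = 1 + c1^2 + c2^2 - 2 * m := by rw [hm, hc2]; ring
    rw [eR, er, hg1, hg2, hk]; ring
  have f1 : t * ((x - c1)^2 + (y - c2)^2 - r^2) ≤ 0 :=
    mul_nonpos_of_nonneg_of_nonpos htp.le (by linarith)
  have f2 : (s * (1 - n) - t * (1 - m)) * (x^2 + y^2 - 1) ≤ 0 :=
    mul_nonpos_of_nonpos_of_nonneg (by linarith) (by linarith)
  have f3 : s * ((x - b1)^2 + (y - b2)^2 - R^2) ≤ 0 := by rw [e]; linarith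
  have := nonpos_of_mul_nonpos_right f3 hsp
  linarith

lemma mem_cb (z w : ℂ) (r : ℝ) (hr : 0 < r) :
    z ∈ closedBall w r ↔ (z.re - w.re)^2 + (z.im - w.im)^2 ≤ r^2 := by
  rw [mem_closedBall, Complex.dist_eq_re_im, Real.sqrt_le_left hr.le]

lemma angle_bounds (d r1 r2 : ℝ) (h1 : 0 < r1) (h2 : 0 < r2) (hd : |r1 - r2| < d)
    (hd' : d < r1 + r2) : -1 ≤ (d^2 - r1^2 - r2^2) / (2 * r1 * r2) ∧
      (d^2 - r1^2 - r2^2) / (2 * r1 * r2) ≤ 1 := by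
  obtain ⟨a1, a2⟩ := abs_lt.1 hd
  have hpos : 0 < 2 * r1 * r2 := by positivity
  rw [le_div_iff₀ hpos, div_le_iff₀ hpos]
  constructor <;> nlinarith

lemma not_sub_dist (a b : ℂ) (r s : ℝ) (h1 : ¬ closedBall a r ⊆ closedBall b s)
    (h2 : ¬ closedBall b s ⊆ closedBall a r) : |r - s| < dist a b := by
  rw [abs_lt]
  constructor
  · by_contra hcon
    exact h1 (closedBall_subset_closedBall' (by linarith))
  · by_contra hcon
    exact h2 (closedBall_subset_closedBall' (by rw [dist_comm]; linarith))

lemma overlap_dist (a b : ℂ) (r s : ℝ) (h : (ball a r ∩ ball b s).Nonempty) :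
    dist a b < r + s := by
  obtain ⟨x, hx, hy⟩ := h
  rw [mem_ball] at hx hy
  have := dist_triangle_left a b x
  linarith

/-- **Lemma (mogwai).** Let `A`, `B`, `C` be closed disks in `ℂ`, none contained in any
other.  If `A` and `C` overlap (their interiors meet) and `A ∩ C ⊆ B`, then `A` and `B`
overlap and `∠(A,C) < ∠(A,B)`. -/
theorem lem_mogwai
    (cA cB cC : ℂ) (rA rB rC : ℝ) (hrA : 0 < rA) (hrB : 0 < rB) (hrC : 0 < rC)
    (hAB : ¬ closedBall cA rA ⊆ closedBall cB rB)
    (hBA : ¬ closedBall cB rB ⊆ closedBall cA rA)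
    (hAC : ¬ closedBall cA rA ⊆ closedBall cC rC)
    (hCA : ¬ closedBall cC rC ⊆ closedBall cA rA)
    (hBC : ¬ closedBall cB rB ⊆ closedBall cC rC)
    (hCB : ¬ closedBall cC rC ⊆ closedBall cB rB)
    (hovAC : (ball cA rA ∩ ball cC rC).Nonempty)
    (hsub : closedBall cA rA ∩ closedBall cC rC ⊆ closedBall cB rB) :
    (ball cA rA ∩ ball cB rB).Nonempty ∧
      extAngle cA rA cC rC < extAngle cA rA cB rB := by
  have hov : (ball cA rA ∩ ball cB rB).Nonempty := by
    obtain ⟨x, hx, hy⟩ := hovAC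
    refine ⟨x, hx, ?_⟩
    have h1 : ball cA rA ∩ ball cC rC ⊆ interior (closedBall cB rB) := by
      apply interior_maximal _ (isOpen_ball.inter isOpen_ball)
      exact (Set.inter_subset_inter ball_subset_closedBall ball_subset_closedBall).trans hsub
    rw [interior_closedBall _ hrB.ne'] at h1
    exact h1 ⟨hx, hy⟩
  refine ⟨hov, ?_⟩
  have dB := not_sub_dist _ _ _ _ hAB hBA
  have dC := not_sub_dist _ _ _ _ hAC hCA
  have dB' := overlap_dist _ _ _ _ hov
  have dC' := overlap_dist _ _ _ _ hovAC
  have hdB : 0 < dist cA cB := (abs_nonneg _).trans_lt dB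
  have hdC : 0 < dist cA cC := (abs_nonneg _).trans_lt dC
  have kB := angle_bounds _ _ _ hrA hrB dB dB'
  have kC := angle_bounds _ _ _ hrA hrC dC dC'
  unfold extAngle
  apply Real.arccos_lt_arccos kB.1 _ kC.2
  by_contra hcon
  push Not at hcon
  rw [div_le_div_iff₀ (by positivity) (by positivity)] at hcon
  have hcon' : (dist cA cC ^ 2 - rA ^ 2 - rC ^ 2) * rB ≤
      (dist cA cB ^ 2 - rA ^ 2 - rB ^ 2) * rC := by
    refine le_of_mul_le_mul_left ?_ (show 0 < 2 * rA by positivity)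
    linarith
  have eB : dist cA cB ^ 2 = (cB.re - cA.re)^2 + (cB.im - cA.im)^2 := by
    rw [Complex.dist_eq_re_im, Real.sq_sqrt (by positivity)]; ring
  have eC : dist cA cC ^ 2 = (cC.re - cA.re)^2 + (cC.im - cA.im)^2 := by
    rw [Complex.dist_eq_re_im, Real.sq_sqrt (by positivity)]; ring
  have sc : ∀ (x y u v w z : ℝ) (r : ℝ),
      ((x - (u - w) / rA)^2 + (y - (v - z) / rA)^2 ≤ (r / rA)^2 ↔
      (w + rA * x - u)^2 + (z + rA * y - v)^2 ≤ r^2) := by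
    intro x y u v w z r
    have e : (x - (u - w) / rA)^2 + (y - (v - z) / rA)^2
        = ((w + rA * x - u)^2 + (z + rA * y - v)^2) / rA^2 := by
      field_simp; ring
    rw [e, div_pow, div_le_div_iff_of_pos_right (by positivity)]
  have absd : ∀ (r d : ℝ), |rA - r| < d → |1 - r / rA| < d / rA := by
    intro r d hd
    have e : 1 - r / rA = (rA - r) / rA := by field_simp
    rw [e, abs_div, abs_of_pos hrA]
    exact div_lt_div_of_pos_right hd hrA
  have addd : ∀ (r d : ℝ), d < rA + r → d / rA < 1 + r / rA := by
    intro r d hd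
    have e : 1 + r / rA = (rA + r) / rA := by field_simp
    rw [e]
    exact div_lt_div_of_pos_right hd hrA
  have key := core ((cB.re - cA.re) / rA) ((cB.im - cA.im) / rA)
    ((cC.re - cA.re) / rA) ((cC.im - cA.im) / rA) (dist cA cB / rA) (dist cA cC / rA)
    (rC / rA) (rB / rA) (by positivity) (by positivity) (by positivity) (by positivity)
    (by rw [div_pow, eB]; ring) (by rw [div_pow, eC]; ring)
    (absd _ _ dB) (addd _ _ dB') (absd _ _ dC) (addd _ _ dC')
    (by
      intro x y h1 h2
      rw [sc] at h2 ⊢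
      have h3 : (⟨cA.re + rA * x, cA.im + rA * y⟩ : ℂ) ∈ closedBall cB rB := by
        apply hsub
        constructor
        · rw [mem_cb _ _ _ hrA]
          simp only
          nlinarith [mul_nonneg (sq_nonneg rA) (sub_nonneg.2 h1)]
        · rw [mem_cb _ _ _ hrC]
          exact h2
      rw [mem_cb _ _ _ hrB] at h3
      exact h3)
    (by
      have e1 : ((dist cA cC / rA) ^ 2 - 1 - (rC / rA) ^ 2) * (rB / rA)
          = ((dist cA cC ^ 2 - rA ^ 2 - rC ^ 2) * rB) / rA^3 := by field_simp
      have e2 : ((dist cA cB / rA) ^ 2 - 1 - (rB / rA) ^ 2) * (rC / rA)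
          = ((dist cA cB ^ 2 - rA ^ 2 - rB ^ 2) * rC) / rA^3 := by field_simp
      rw [e1, e2]
      exact div_le_div_of_nonneg_right hcon' (by positivity))
  apply hCB
  intro z hz
  rw [mem_cb _ _ _ hrC] at hz
  rw [mem_cb _ _ _ hrB]
  have := key ((z.re - cA.re) / rA) ((z.im - cA.im) / rA)
  rw [sc, sc] at this
  have er : cA.re + rA * ((z.re - cA.re) / rA) = z.re := by field_simp; ring
  have ei : cA.im + rA * ((z.im - cA.im) / rA) = z.im := by field_simp; ring
  rw [er, ei] at this
  exact this hz
end

section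
/- Let n ≥ 3 and let {Dᵢ : i ∈ ℤ/nℤ} and {D̃ᵢ : i ∈ ℤ/nℤ} be collections of closed disks in ℂ such that: no three disks of either collection have a common point; D̃ᵢ is contained in the interior of Dᵢ for all i; Dᵢ overlaps with Dᵢ₊₁ and Dᵢ₋₁, and D̃ᵢ overlaps with D̃ᵢ₊₁ and D̃ᵢ₋₁, for all i; and Dᵢ meets Dⱼ only when i = j ± 1. Then Σᵢ ∠(D̃ᵢ, D̃ᵢ₊₁) < Σᵢ ∠(Dᵢ, Dᵢ₊₁); in particular, for some i, ∠(Dᵢ, Dᵢ₊₁) ≠ ∠(D̃ᵢ, D̃ᵢ₊₁). -/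
open Metric Real

/-- Two circles cross transversely wherever they meet. -/
def CircTrans (c₁ : ℂ) (r₁ : ℝ) (c₂ : ℂ) (r₂ : ℝ) : Prop :=
  (Metric.sphere c₁ r₁ ∩ Metric.sphere c₂ r₂).Nonempty →
    dist c₁ c₂ ≠ r₁ + r₂ ∧ dist c₁ c₂ ≠ |r₁ - r₂|

open InnerProductGeometry in
lemma arc_lemma (z w : ℂ) (hz : z ≠ 0) (hw : w ≠ 0) (a b : ℝ) (ha : 0 ≤ a) (hb : 0 ≤ b)
    (h : angle z w ≤ a + b) : ∃ u : ℂ, ‖u‖ = 1 ∧ angle z u ≤ a ∧ angle u w ≤ b := by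
  by_cases hle : angle z w ≤ a
  · refine ⟨(‖w‖⁻¹ : ℝ) • w, ?_, ?_, ?_⟩
    · rw [norm_smul]; simp [hw]
    · rwa [angle_smul_right_of_pos _ _ (by positivity)]
    · rw [angle_smul_left_of_pos _ _ (by positivity), angle_self hw]; exact hb
  push Not at hle
  rw [angle_comm, Complex.angle_eq_abs_arg hw hz] at h hle
  set φ := (w / z).arg with hφ
  have hφ1 := Complex.neg_pi_lt_arg (w / z)
  have hφ2 := Complex.arg_le_pi (w / z)
  rw [← hφ] at hφ1 hφ2
  obtain ⟨τ, hτ, hτ1, hτ2⟩ : ∃ τ : ℝ, |τ| = a ∧ |φ - τ| ≤ b ∧ (|φ - τ| ≤ |φ|) := by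
    rcases le_total 0 φ with h0 | h0
    · rw [abs_of_nonneg h0] at h hle
      refine ⟨a, abs_of_nonneg ha, ?_, ?_⟩
      · rw [abs_of_nonneg (by linarith)]; linarith
      · rw [abs_of_nonneg (by linarith), abs_of_nonneg h0]; linarith
    · rw [abs_of_nonpos h0] at h hle
      refine ⟨-a, by rw [abs_neg, abs_of_nonneg ha], ?_, ?_⟩
      · rw [abs_of_nonpos (by linarith)]; linarith
      · rw [abs_of_nonpos (by linarith), abs_of_nonpos h0]; linarith
  have hφpi : |φ| ≤ π := Complex.abs_arg_le_pi _
  have hwz : w / z = (‖w / z‖ : ℝ) * Complex.exp (φ * Complex.I) := (Complex.norm_mul_exp_arg_mul_I _).symm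
  have hwzpos : 0 < ‖w / z‖ := by
    have : w / z ≠ 0 := div_ne_zero hw hz
    positivity
  have key : ∀ (ρ t : ℝ), 0 < ρ → |t| ≤ π → |((ρ : ℂ) * Complex.exp (t * Complex.I)).arg| ≤ |t| := by
    intro ρ t hρ ht
    rw [Complex.arg_real_mul _ hρ]
    by_cases hm : t = -π
    · subst hm
      rw [abs_neg, abs_of_pos Real.pi_pos]; exact Complex.abs_arg_le_pi _
    · rw [abs_le] at ht
      rw [Complex.exp_mul_I, Complex.arg_cos_add_sin_mul_I ⟨lt_of_le_of_ne ht.1 (Ne.symm hm), ht.2⟩]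
  have hzn : (0:ℝ) < ‖z‖ := by positivity
  have hzc : (‖z‖ : ℂ) ≠ 0 := by exact_mod_cast hzn.ne'
  have hu : (z * ((‖z‖⁻¹ : ℝ) * Complex.exp (τ * Complex.I))) ≠ 0 :=
    mul_ne_zero hz (mul_ne_zero (by exact_mod_cast (inv_pos.2 hzn).ne') (Complex.exp_ne_zero _))
  refine ⟨z * ((‖z‖⁻¹ : ℝ) * Complex.exp (τ * Complex.I)), ?_, ?_, ?_⟩
  · rw [norm_mul, norm_mul, Complex.norm_exp_ofReal_mul_I]
    simp [hz]
  · rw [angle_comm, Complex.angle_eq_abs_arg hu hz, mul_div_cancel_left₀ _ hz, ← hτ]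
    exact key _ _ (by positivity) (by rw [hτ]; linarith)
  · rw [angle_comm, Complex.angle_eq_abs_arg hw hu, ← div_div, hwz]
    have : (‖w / z‖ : ℝ) * Complex.exp (φ * Complex.I) / ((‖z‖⁻¹ : ℝ) * Complex.exp (τ * Complex.I))
        = ((‖w / z‖ * ‖z‖ : ℝ) : ℂ) * Complex.exp ((φ - τ : ℝ) * Complex.I) := by
      push_cast
      rw [sub_mul, Complex.exp_sub]
      field_simp
    rw [this]
    exact (key _ _ (by positivity) (by linarith)).trans hτ1

open InnerProductGeometry in
lemma in_arc (p x u : ℂ) (ρ r : ℝ) (hρ : 0 < ρ) (hr : 0 < r) (hl : 0 < ‖x - p‖) (hu : ‖u‖ = 1)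
    (hlr : (‖x - p‖ - ρ) ^ 2 ≤ r ^ 2)
    (h : angle (x - p) u ≤ arccos ((ρ ^ 2 + ‖x - p‖ ^ 2 - r ^ 2) / (2 * ρ * ‖x - p‖))) :
    ‖(p + ρ • u) - x‖ ≤ r := by
  set l := ‖x - p‖ with hl'
  set T := (ρ ^ 2 + l ^ 2 - r ^ 2) / (2 * ρ * l) with hT
  have hT1 : T ≤ 1 := by
    rw [hT, div_le_one (by positivity)]; nlinarith
  have h1 : T ≤ Real.cos (angle (x - p) u) := by
    have h2 := Real.cos_le_cos_of_nonneg_of_le_pi (angle_nonneg _ _) (arccos_le_pi T) h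
    refine le_trans ?_ h2
    rcases le_total (-1) T with h3 | h3
    · rw [Real.cos_arccos h3 hT1]
    · exact h3.trans (Real.neg_one_le_cos _)
  have h2 := cos_angle_mul_norm_mul_norm (x - p) u
  rw [hu, mul_one, ← hl'] at h2
  have h3 : T * (2 * ρ * l) = ρ ^ 2 + l ^ 2 - r ^ 2 := by rw [hT]; field_simp
  have h4 : ‖(p + ρ • u) - x‖ ^ 2 = ρ ^ 2 - 2 * ρ * inner ℝ (x - p) u + l ^ 2 := by
    have : (p + ρ • u) - x = ρ • u - (x - p) := by ring
    rw [this, norm_sub_sq_real, norm_smul, hu, inner_smul_left, real_inner_comm, hl']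
    simp; ring
  have h5 : T * (2 * ρ * l) ≤ Real.cos (angle (x - p) u) * (2 * ρ * l) := by gcongr
  have : ‖(p + ρ • u) - x‖ ^ 2 ≤ r ^ 2 := by rw [h4, ← h2]; nlinarith
  exact abs_le_of_sq_le_sq' this hr.le |>.2

lemma tri_angle (s a l : ℝ) (hs : 0 < s) (ha : 0 < a) (hl : 0 < l)
    (h1 : (s - a) ^ 2 < l ^ 2) (h2 : l ^ 2 ≤ (s + a) ^ 2) :
    arccos ((l ^ 2 - a ^ 2 - s ^ 2) / (2 * a * s)) ≤
      arccos ((s ^ 2 + l ^ 2 - a ^ 2) / (2 * s * l)) + arccos ((a ^ 2 + l ^ 2 - s ^ 2) / (2 * a * l)) := by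
  have h1' := abs_lt_of_sq_lt_sq' h1 hl.le
  have h2' := abs_le_of_sq_le_sq' h2 (by positivity)
  set X := (l ^ 2 - a ^ 2 - s ^ 2) / (2 * a * s) with hX
  set x := (s ^ 2 + l ^ 2 - a ^ 2) / (2 * s * l) with hx
  set y := (a ^ 2 + l ^ 2 - s ^ 2) / (2 * a * l) with hy
  have hx1 : -1 ≤ x := by rw [hx, le_div_iff₀ (by positivity)]; nlinarith
  have hx2 : x ≤ 1 := by rw [hx, div_le_iff₀ (by positivity)]; nlinarith
  have hy1 : -1 ≤ y := by rw [hy, le_div_iff₀ (by positivity)]; nlinarith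
  have hy2 : y ≤ 1 := by rw [hy, div_le_iff₀ (by positivity)]; nlinarith
  by_cases hpi : π ≤ arccos x + arccos y
  · exact (arccos_le_pi _).trans hpi
  push Not at hpi
  rw [← Real.arccos_cos (add_nonneg (arccos_nonneg x) (arccos_nonneg y)) hpi.le]
  apply Real.arccos_le_arccos
  rw [Real.cos_add, Real.cos_arccos hx1 hx2, Real.cos_arccos hy1 hy2, Real.sin_arccos,
    Real.sin_arccos, ← Real.sqrt_mul (by nlinarith)]
  have : (1 - x ^ 2) * (1 - y ^ 2) = (x * y - X) ^ 2 := by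
    rw [hx, hy, hX]; field_simp; ring
  rw [this, Real.sqrt_sq_eq_abs]
  linarith [le_abs_self (x * y - X)]

open InnerProductGeometry in
/-- `ψ + ε < θ` for a disk `(d, s)` inside a half-plane. -/
lemma half_aux (a d v : ℂ) (α s k : ℝ) (hα : 0 < α) (hs : 0 < s) (hv : ‖v‖ = 1)
    (hl : 0 < ‖d - a‖)
    (h1 : (s - α) ^ 2 < ‖d - a‖ ^ 2) (h2 : ‖d - a‖ ^ 2 ≤ (s + α) ^ 2)
    (hD : ∀ w : ℂ, ‖w - d‖ ≤ s → k < inner ℝ w v)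
    (hT1 : -1 ≤ (k - inner ℝ a v) / α) :
    angle (d - a) v + arccos ((α ^ 2 + ‖d - a‖ ^ 2 - s ^ 2) / (2 * α * ‖d - a‖))
      < arccos ((k - inner ℝ a v) / α) := by
  have h1' := abs_lt_of_sq_lt_sq' h1 hl.le
  have h2' := abs_le_of_sq_le_sq' h2 (by positivity)
  by_contra hcon
  push Not at hcon
  have hv0 : v ≠ 0 := by intro h; simp [h] at hv
  have hz : d - a ≠ 0 := norm_pos_iff.1 hl
  set T := (k - inner ℝ a v) / α with hT
  obtain ⟨u, hu, hu1, hu2⟩ := arc_lemma (d - a) (-v) hz (neg_ne_zero.2 hv0) _ (π - arccos T)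
    (arccos_nonneg ((α ^ 2 + ‖d - a‖ ^ 2 - s ^ 2) / (2 * α * ‖d - a‖)))
    (by linarith [arccos_le_pi T]) (by rw [angle_neg_right]; linarith)
  have hm := in_arc a d u α s hα hs hl hu (sq_le_sq' (by linarith) (by linarith)) hu1
  have hk := hD _ hm
  rw [inner_add_left, real_inner_smul_left] at hk
  rw [angle_neg_right] at hu2
  have hu3 : arccos T ≤ angle u v := by linarith
  have h4 : Real.cos (angle u v) ≤ T := by
    have h5 := Real.cos_le_cos_of_nonneg_of_le_pi (arccos_nonneg T) (angle_le_pi u v) hu3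
    rcases le_total T 1 with h | h
    · rwa [Real.cos_arccos hT1 h] at h5
    · exact (Real.cos_le_one _).trans h
  have h6 := cos_angle_mul_norm_mul_norm u v
  rw [hu, hv, mul_one, mul_one] at h6
  rw [h6, hT, le_div_iff₀ hα] at h4
  linarith

open InnerProductGeometry in
lemma half_plane (a b d v : ℂ) (α β s k : ℝ) (hα : 0 < α) (hβ : 0 < β) (hs : 0 < s) (hv : ‖v‖ = 1)
    (ha1 : (s - α) ^ 2 < ‖d - a‖ ^ 2) (ha2 : ‖d - a‖ ^ 2 ≤ (s + α) ^ 2)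
    (hb1 : (s - β) ^ 2 < ‖d - b‖ ^ 2) (hb2 : ‖d - b‖ ^ 2 ≤ (s + β) ^ 2)
    (hD : ∀ w : ℂ, ‖w - d‖ ≤ s → k < inner ℝ w v)
    (hAB : ∀ w : ℂ, ‖w - d‖ ≤ s → ‖w - a‖ ≤ α → ‖w - b‖ ≤ β → False)
    (hTa : -1 ≤ (k - inner ℝ a v) / α) (hTb : -1 ≤ (k - inner ℝ b v) / β) :
    arccos ((‖d - a‖ ^ 2 - α ^ 2 - s ^ 2) / (2 * α * s)) +
      arccos ((‖d - b‖ ^ 2 - β ^ 2 - s ^ 2) / (2 * β * s)) <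
    arccos ((k - inner ℝ a v) / α) + arccos ((k - inner ℝ b v) / β) := by
  have hla : 0 < ‖d - a‖ := by
    rcases (norm_nonneg (d - a)).eq_or_lt with h | h
    · rw [← h] at ha1; nlinarith [sq_nonneg (s - α)]
    · exact h
  have hlb : 0 < ‖d - b‖ := by
    rcases (norm_nonneg (d - b)).eq_or_lt with h | h
    · rw [← h] at hb1; nlinarith [sq_nonneg (s - β)]
    · exact h
  have A1 := half_aux a d v α s k hα hs hv hla ha1 ha2 hD hTa
  have B1 := half_aux b d v β s k hβ hs hv hlb hb1 hb2 hD hTb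
  have A2 := tri_angle s α _ hs hα hla ha1 ha2
  have B2 := tri_angle s β _ hs hβ hlb hb1 hb2
  have a1' := abs_lt_of_sq_lt_sq' ha1 hla.le
  have a2' := abs_le_of_sq_le_sq' ha2 (by positivity)
  have b1' := abs_lt_of_sq_lt_sq' hb1 hlb.le
  have b2' := abs_le_of_sq_le_sq' hb2 (by positivity)
  have C : arccos ((s ^ 2 + ‖d - a‖ ^ 2 - α ^ 2) / (2 * s * ‖d - a‖)) +
      arccos ((s ^ 2 + ‖d - b‖ ^ 2 - β ^ 2) / (2 * s * ‖d - b‖)) ≤ angle (d - a) (d - b) := by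
    by_contra hcon
    push Not at hcon
    have hna : ‖a - d‖ = ‖d - a‖ := norm_sub_rev _ _
    have hnb : ‖b - d‖ = ‖d - b‖ := norm_sub_rev _ _
    obtain ⟨u, hu, hu1, hu2⟩ := arc_lemma (a - d) (b - d) (norm_pos_iff.1 (by rw [hna]; exact hla))
      (norm_pos_iff.1 (by rw [hnb]; exact hlb)) _ _ (arccos_nonneg _) (arccos_nonneg _)
      (by rw [← angle_neg_neg, neg_sub, neg_sub]; exact hcon.le)
    rw [angle_comm] at hu2
    rw [← hna] at hu1
    rw [← hnb] at hu2
    refine hAB (d + s • u) ?_ (in_arc d a u s α hs hα (by rw [hna]; exact hla) hu ?_ hu1)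
      (in_arc d b u s β hs hβ (by rw [hnb]; exact hlb) hu ?_ hu2)
    · rw [add_sub_cancel_left, norm_smul, hu, Real.norm_of_nonneg hs.le, mul_one]
    · rw [hna]; exact sq_le_sq' (by linarith) (by linarith)
    · rw [hnb]; exact sq_le_sq' (by linarith) (by linarith)
  have E := angle_le_angle_add_angle (d - a) v (d - b)
  rw [angle_comm v] at E
  linarith
lemma inv_formula (x y : ℂ) (r t P Q : ℝ) (hr : 0 < r) (ht : 0 < t) (hP : 0 < P) (hQ : 0 < Q)
    (hP' : P = ‖x‖ ^ 2 - r ^ 2) (hQ' : Q = ‖y‖ ^ 2 - t ^ 2) :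
    (‖P⁻¹ • x - Q⁻¹ • y‖ ^ 2 - (t / Q) ^ 2 - (r / P) ^ 2) / (2 * (t / Q) * (r / P)) =
      (‖y - x‖ ^ 2 - t ^ 2 - r ^ 2) / (2 * t * r) := by
  rw [norm_sub_sq_real, norm_sub_sq_real, norm_smul, norm_smul, real_inner_smul_left,
    real_inner_smul_right, real_inner_comm y x, Real.norm_of_nonneg (inv_pos.2 hP).le,
    Real.norm_of_nonneg (inv_pos.2 hQ).le]
  have e1 : ‖x‖ ^ 2 = P + r ^ 2 := by linarith
  have e2 : ‖y‖ ^ 2 = Q + t ^ 2 := by linarith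
  rw [mul_pow, mul_pow, e1, e2]
  field_simp
  ring

lemma inv_mem (x w : ℂ) (r P : ℝ) (hr : 0 < r) (hP : 0 < P)
    (hP' : P = ‖x‖ ^ 2 - r ^ 2) (h : ‖w - P⁻¹ • x‖ ≤ r / P) (hw : 0 < ‖w‖) :
    ‖(‖w‖ ^ 2)⁻¹ • w - x‖ ≤ r := by
  have h1 : ‖w - P⁻¹ • x‖ ^ 2 ≤ (r / P) ^ 2 := by gcongr
  have e1 : ‖x‖ ^ 2 = P + r ^ 2 := by linarith
  refine (abs_le_of_sq_le_sq' ?_ hr.le).2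
  rw [norm_sub_sq_real, norm_smul, real_inner_smul_right, mul_pow, e1,
    Real.norm_of_nonneg (inv_pos.2 hP).le] at h1
  rw [norm_sub_sq_real, norm_smul, real_inner_smul_left, mul_pow, e1,
    Real.norm_of_nonneg (by positivity)]
  have h2 : ‖w‖ ^ 2 - 2 * (P⁻¹ * inner ℝ w x) + P⁻¹ ≤ 0 := by
    have : P⁻¹ ^ 2 * (P + r ^ 2) - (r / P) ^ 2 = P⁻¹ := by field_simp; ring
    linarith
  have h3 : ((‖w‖ ^ 2)⁻¹ * P) * (‖w‖ ^ 2 - 2 * (P⁻¹ * inner ℝ w x) + P⁻¹) ≤ 0 :=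
    mul_nonpos_of_nonneg_of_nonpos (by positivity) h2
  have h4 : ((‖w‖ ^ 2)⁻¹ * P) * (‖w‖ ^ 2 - 2 * (P⁻¹ * inner ℝ w x) + P⁻¹) =
    (‖w‖ ^ 2)⁻¹ ^ 2 * ‖w‖ ^ 2 - 2 * ((‖w‖ ^ 2)⁻¹ * inner ℝ w x) + P := by
    field_simp; ring
  linarith

lemma inv_ne (x w : ℂ) (r P : ℝ) (hr : 0 < r) (hP : 0 < P)
    (hx : r < ‖x‖) (h : ‖w - P⁻¹ • x‖ ≤ r / P) : 0 < ‖w‖ := by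
  rw [norm_pos_iff]
  rintro rfl
  rw [zero_sub, norm_neg, norm_smul, Real.norm_of_nonneg (inv_pos.2 hP).le, div_eq_inv_mul] at h
  have := le_of_mul_le_mul_left h (inv_pos.2 hP)
  linarith

lemma bounds_of_ratio (l t r : ℝ) (ht : 0 < t) (hr : 0 < r) :
    ((r - t) ^ 2 < l ^ 2 ↔ -1 < (l ^ 2 - t ^ 2 - r ^ 2) / (2 * t * r)) ∧
    (l ^ 2 ≤ (r + t) ^ 2 ↔ (l ^ 2 - t ^ 2 - r ^ 2) / (2 * t * r) ≤ 1) := by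
  have h : 0 < 2 * t * r := by positivity
  constructor
  · rw [lt_div_iff₀ h]; constructor <;> intro h <;> nlinarith
  · rw [div_le_iff₀ h]; constructor <;> intro h <;> nlinarith

lemma inv_line (a d : ℂ) (α s P : ℝ) (hα : 0 < α) (hs : 0 < s) (hP : 0 < P)
    (hP' : P = ‖a‖ ^ 2 - α ^ 2) (hd : ‖d‖ = s) :
    ((2 * s)⁻¹ - inner ℝ (P⁻¹ • a) (s⁻¹ • d)) / (α / P) =
      (‖a - d‖ ^ 2 - α ^ 2 - s ^ 2) / (2 * α * s) := by
  rw [norm_sub_sq_real, real_inner_smul_left, real_inner_smul_right, hd]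
  have e1 : ‖a‖ ^ 2 = P + α ^ 2 := by linarith
  rw [e1]
  field_simp
  ring

lemma step_zero (a b d e : ℂ) (α β s t : ℝ) (hα : 0 < α) (hβ : 0 < β) (hs : 0 < s) (ht : 0 < t)
    (hd : ‖d‖ = s) (ha : α < ‖a‖) (hb : β < ‖b‖) (he : t < ‖e‖)
    (ha1 : (t - α) ^ 2 < ‖a - e‖ ^ 2) (ha2 : ‖a - e‖ ^ 2 ≤ (t + α) ^ 2)
    (hb1 : (t - β) ^ 2 < ‖b - e‖ ^ 2) (hb2 : ‖b - e‖ ^ 2 ≤ (t + β) ^ 2)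
    (hin : ∀ x : ℂ, ‖x - e‖ ≤ t → ‖x - d‖ < s)
    (hABE : ∀ x : ℂ, ‖x - e‖ ≤ t → ‖x - a‖ ≤ α → ‖x - b‖ ≤ β → False)
    (had : (s - α) ^ 2 < ‖a - d‖ ^ 2) (hbd : (s - β) ^ 2 < ‖b - d‖ ^ 2) :
    arccos ((‖a - e‖ ^ 2 - α ^ 2 - t ^ 2) / (2 * α * t)) +
      arccos ((‖b - e‖ ^ 2 - β ^ 2 - t ^ 2) / (2 * β * t)) <
    arccos ((‖a - d‖ ^ 2 - α ^ 2 - s ^ 2) / (2 * α * s)) +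
      arccos ((‖b - d‖ ^ 2 - β ^ 2 - s ^ 2) / (2 * β * s)) := by
  obtain ⟨P, hP⟩ : ∃ P, P = ‖a‖ ^ 2 - α ^ 2 := ⟨_, rfl⟩
  obtain ⟨Q, hQ⟩ : ∃ Q, Q = ‖b‖ ^ 2 - β ^ 2 := ⟨_, rfl⟩
  obtain ⟨R, hR⟩ : ∃ R, R = ‖e‖ ^ 2 - t ^ 2 := ⟨_, rfl⟩
  have hP0 : 0 < P := by nlinarith
  have hQ0 : 0 < Q := by nlinarith
  have hR0 : 0 < R := by nlinarith
  have fa := inv_formula e a t α R P ht hα hR0 hP0 hR hP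
  have fb := inv_formula e b t β R Q ht hβ hR0 hQ0 hR hQ
  rw [← inv_line a d α s P hα hs hP0 hP hd, ← inv_line b d β s Q hβ hs hQ0 hQ hd, ← fa, ← fb]
  have hα' : 0 < α / P := by positivity
  have hβ' : 0 < β / Q := by positivity
  have ht' : 0 < t / R := by positivity
  refine half_plane (P⁻¹ • a) (Q⁻¹ • b) (R⁻¹ • e) (s⁻¹ • d) (α / P) (β / Q) (t / R) (2 * s)⁻¹
    hα' hβ' ht' ?_ ?_ ?_ ?_ ?_ ?_ ?_ ?_ ?_
  · rw [norm_smul, hd, Real.norm_of_nonneg (by positivity), inv_mul_cancel₀ hs.ne']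
  · rw [(bounds_of_ratio _ _ _ hα' ht').1, fa, ← (bounds_of_ratio _ _ _ hα ht).1]; exact ha1
  · rw [(bounds_of_ratio _ _ _ hα' ht').2, fa, ← (bounds_of_ratio _ _ _ hα ht).2]; exact ha2
  · rw [(bounds_of_ratio _ _ _ hβ' ht').1, fb, ← (bounds_of_ratio _ _ _ hβ ht).1]; exact hb1
  · rw [(bounds_of_ratio _ _ _ hβ' ht').2, fb, ← (bounds_of_ratio _ _ _ hβ ht).2]; exact hb2
  · intro w hw
    have hw0 := inv_ne e w t R ht hR0 he hw
    have h1 := hin _ (inv_mem e w t R ht hR0 hR hw hw0)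
    have h2 : ‖(‖w‖ ^ 2)⁻¹ • w - d‖ ^ 2 < s ^ 2 := by gcongr
    rw [norm_sub_sq_real, norm_smul, real_inner_smul_left, mul_pow, hd,
      Real.norm_of_nonneg (by positivity)] at h2
    have h3 : (‖w‖ ^ 2)⁻¹ ^ 2 * ‖w‖ ^ 2 = (‖w‖ ^ 2)⁻¹ := by field_simp
    rw [h3] at h2
    have h4 : (‖w‖ ^ 2)⁻¹ * 1 < (‖w‖ ^ 2)⁻¹ * (2 * inner ℝ w d) := by linarith
    have h5 := lt_of_mul_lt_mul_left h4 (by positivity)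
    rw [real_inner_smul_right, mul_inv, mul_comm, mul_lt_mul_iff_right₀ (by positivity)]
    linarith
  · intro w hw hwa hwb
    have hw0 := inv_ne e w t R ht hR0 he hw
    exact hABE _ (inv_mem e w t R ht hR0 hR hw hw0) (inv_mem a w α P hα hP0 hP hwa hw0)
      (inv_mem b w β Q hβ hQ0 hQ hwb hw0)
  · rw [inv_line a d α s P hα hs hP0 hP hd]
    exact ((bounds_of_ratio _ _ _ hα hs).1.1 had).le
  · rw [inv_line b d β s Q hβ hs hQ0 hQ hd]
    exact ((bounds_of_ratio _ _ _ hβ hs).1.1 hbd).le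

lemma exists_q (a b d : ℂ) (α β s : ℝ) (hs : 0 < s)
    (hABD : closedBall a α ∩ closedBall b β ∩ closedBall d s = ∅)
    (hA : (closedBall a α ∩ closedBall d s).Nonempty)
    (hB : (closedBall b β ∩ closedBall d s).Nonempty) :
    ∃ q ∈ sphere d s, q ∉ closedBall a α ∧ q ∉ closedBall b β := by
  by_contra hcon
  push Not at hcon
  have hss : sphere d s ⊆ closedBall d s := sphere_subset_closedBall
  have hpre : IsPreconnected (sphere d s) := by
    apply isPreconnected_sphere
    rw [Complex.rank_real_complex]; norm_num
  have hull : ∀ x : ℂ, ∀ ρ : ℝ, sphere d s ⊆ closedBall x ρ → closedBall d s ⊆ closedBall x ρ := by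
    intro x ρ h
    rw [← convexHull_sphere_eq_closedBall d hs.le]
    exact convexHull_min h (convex_closedBall x ρ)
  have hne : ∀ x, x ∈ closedBall a α → x ∈ closedBall b β → x ∈ closedBall d s → False := by
    intro x h1 h2 h3
    have : x ∈ closedBall a α ∩ closedBall b β ∩ closedBall d s := ⟨⟨h1, h2⟩, h3⟩
    rw [hABD] at this; exact this
  by_cases h1 : (sphere d s ∩ closedBall a α).Nonempty
  · by_cases h2 : (sphere d s ∩ closedBall b β).Nonempty
    · obtain ⟨x, hx, hxa, hxb⟩ := isPreconnected_closed_iff.1 hpre _ _ isClosed_closedBall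
        isClosed_closedBall (fun q hq => by
          by_cases hqa : q ∈ closedBall a α
          · exact Or.inl hqa
          · exact Or.inr (hcon q hq hqa)) h1 h2
      exact hne x hxa hxb (hss hx)
    · obtain ⟨x, hxb, hxd⟩ := hB
      refine hne x (hull a α ?_ hxd) hxb hxd
      intro q hq
      by_contra hqa
      exact h2 ⟨q, hq, hcon q hq hqa⟩
  · obtain ⟨x, hxa, hxd⟩ := hA
    refine hne x hxa (hull b β ?_ hxd) hxd
    intro q hq
    exact hcon q hq (fun hqa => h1 ⟨q, hq, hqa⟩)

lemma dist_gt (x y : ℂ) (r t : ℝ) (h1 : ¬ closedBall x r ⊆ closedBall y t)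
    (h2 : ¬ closedBall y t ⊆ closedBall x r) : (t - r) ^ 2 < ‖x - y‖ ^ 2 := by
  have h3 : t - r < dist x y := by
    by_contra h; push Not at h
    exact h1 (closedBall_subset_closedBall' (by linarith))
  have h4 : r - t < dist x y := by
    by_contra h; push Not at h
    exact h2 (closedBall_subset_closedBall' (by rw [dist_comm]; linarith))
  rw [← dist_eq_norm]
  exact sq_lt_sq' (by linarith) h3

lemma disk_step (a b d e : ℂ) (α β s t : ℝ) (hα : 0 < α) (hβ : 0 < β) (hs : 0 < s) (ht : 0 < t)
    (hin : closedBall e t ⊆ ball d s)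
    (hA : (ball a α ∩ ball e t).Nonempty) (hB : (ball b β ∩ ball e t).Nonempty)
    (hABD : closedBall a α ∩ closedBall b β ∩ closedBall d s = ∅)
    (hAD : ¬ closedBall a α ⊆ closedBall d s) (hBD : ¬ closedBall b β ⊆ closedBall d s) :
    extAngle a α e t + extAngle b β e t < extAngle a α d s + extAngle b β d s := by
  have hED : closedBall e t ⊆ closedBall d s := hin.trans ball_subset_closedBall
  obtain ⟨x, hxa, hxe⟩ := hA
  obtain ⟨y, hyb, hye⟩ := hB
  have hxa' := ball_subset_closedBall hxa
  have hyb' := ball_subset_closedBall hyb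
  have hxe' := ball_subset_closedBall hxe
  have hye' := ball_subset_closedBall hye
  have hne : ∀ x, x ∈ closedBall a α → x ∈ closedBall b β → x ∈ closedBall d s → False := by
    intro x h1 h2 h3
    have : x ∈ closedBall a α ∩ closedBall b β ∩ closedBall d s := ⟨⟨h1, h2⟩, h3⟩
    rw [hABD] at this; exact this
  obtain ⟨q, hq, hqa, hqb⟩ := exists_q a b d α β s hs hABD ⟨x, hxa', hED hxe'⟩ ⟨y, hyb', hED hye'⟩
  have hqe : q ∉ closedBall e t := by
    intro h
    have := hin h
    rw [mem_ball] at this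
    rw [mem_sphere] at hq
    linarith
  have nEA : ¬ closedBall e t ⊆ closedBall a α := fun h => hne y (h hye') hyb' (hED hye')
  have nEB : ¬ closedBall e t ⊆ closedBall b β := fun h => hne x hxa' (h hxe') (hED hxe')
  have nDA : ¬ closedBall d s ⊆ closedBall a α := fun h => nEA (hED.trans h)
  have nDB : ¬ closedBall d s ⊆ closedBall b β := fun h => nEB (hED.trans h)
  have nAE : ¬ closedBall a α ⊆ closedBall e t := fun h => hAD (h.trans hED)
  have nBE : ¬ closedBall b β ⊆ closedBall e t := fun h => hBD (h.trans hED)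
  have dA : dist a e ≤ t + α := by
    have := dist_triangle_left a e x
    rw [mem_ball] at hxa hxe; linarith
  have dB : dist b e ≤ t + β := by
    have := dist_triangle_left b e y
    rw [mem_ball] at hyb hye; linarith
  rw [dist_eq_norm] at dA dB
  simp only [mem_closedBall, mem_sphere, not_le] at hqa hqb hqe hq
  have key := step_zero (a - q) (b - q) (d - q) (e - q) α β s t hα hβ hs ht
    (by rw [← dist_eq_norm, dist_comm]; exact hq) (by rw [← dist_eq_norm, dist_comm]; exact hqa)
    (by rw [← dist_eq_norm, dist_comm]; exact hqb) (by rw [← dist_eq_norm, dist_comm]; exact hqe)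
  simp only [sub_sub_sub_cancel_right] at key
  unfold extAngle
  rw [dist_eq_norm, dist_eq_norm, dist_eq_norm, dist_eq_norm]
  have sh : ∀ x z : ℂ, x - (z - q) = (x + q) - z := fun x z => by ring
  refine key (dist_gt _ _ _ _ nAE nEA) (by gcongr) (dist_gt _ _ _ _ nBE nEB) (by gcongr)
    ?_ ?_ (dist_gt _ _ _ _ hAD nDA) (dist_gt _ _ _ _ hBD nDB)
  · intro x hx
    rw [sh, ← dist_eq_norm] at hx ⊢
    exact hin hx
  · intro x hx hxa hxb
    rw [sh, ← dist_eq_norm] at hx hxa hxb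
    exact hne (x + q) hxa hxb (hED hx)

lemma extAngle_comm (c₁ c₂ : ℂ) (r₁ r₂ : ℝ) : extAngle c₁ r₁ c₂ r₂ = extAngle c₂ r₂ c₁ r₁ := by
  unfold extAngle
  rw [dist_comm]
  congr 1
  ring

lemma chain_step (n : ℕ) [NeZero n] (hn : 3 ≤ n) (c c' : ZMod n → ℂ) (r r' : ZMod n → ℝ)
    (hr : ∀ i, 0 < r i) (hr' : ∀ i, 0 < r' i)
    (hthin : ∀ i j k : ZMod n, i ≠ j → j ≠ k → i ≠ k →
      closedBall (c i) (r i) ∩ closedBall (c j) (r j) ∩ closedBall (c k) (r k) = ∅)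
    (hov : ∀ i, (ball (c i) (r i) ∩ ball (c (i + 1)) (r (i + 1))).Nonempty)
    (hov' : ∀ i, (ball (c' i) (r' i) ∩ ball (c' (i + 1)) (r' (i + 1))).Nonempty)
    (i : ZMod n) (hc : ∀ j, j ≠ i → c' j = c j) (hrr : ∀ j, j ≠ i → r' j = r j)
    (hin : closedBall (c' i) (r' i) ⊆ ball (c i) (r i)) :
    (∑ i : ZMod n, extAngle (c' i) (r' i) (c' (i + 1)) (r' (i + 1)))
        < (∑ i : ZMod n, extAngle (c i) (r i) (c (i + 1)) (r (i + 1))) := by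
  have one_ne : (1 : ZMod n) ≠ 0 := by
    have : ((1 : ℕ) : ZMod n) ≠ 0 := by
      rw [Ne, ZMod.natCast_eq_zero_iff]
      exact fun h => by have := Nat.le_of_dvd one_pos h; omega
    simpa using this
  have two_ne : (2 : ZMod n) ≠ 0 := by
    have : ((2 : ℕ) : ZMod n) ≠ 0 := by
      rw [Ne, ZMod.natCast_eq_zero_iff]
      exact fun h => by have := Nat.le_of_dvd two_pos h; omega
    simpa using this
  obtain ⟨m, rfl⟩ : ∃ m, i = m + 1 := ⟨i - 1, by ring⟩
  have d1 : m ≠ m + 1 := fun h => one_ne (by linear_combination -h)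
  have d2 : m + 1 + 1 ≠ m + 1 := fun h => one_ne (by linear_combination h)
  have d3 : m ≠ m + 1 + 1 := fun h => two_ne (by linear_combination -h)
  have split : ∀ f : ZMod n → ℝ, ∑ j, f j = f m + f (m + 1) +
      ∑ j ∈ (Finset.univ.erase m).erase (m + 1), f j := by
    intro f
    rw [add_assoc, Finset.add_sum_erase _ _ (by simp [d1.symm]), Finset.add_sum_erase _ _ (by simp)]
  rw [split, split (fun i => extAngle (c i) (r i) (c (i + 1)) (r (i + 1)))]
  have rest : ∑ j ∈ (Finset.univ.erase m).erase (m + 1),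
      extAngle (c' j) (r' j) (c' (j + 1)) (r' (j + 1)) =
      ∑ j ∈ (Finset.univ.erase m).erase (m + 1),
      extAngle (c j) (r j) (c (j + 1)) (r (j + 1)) := by
    refine Finset.sum_congr rfl fun j hj => ?_
    simp only [Finset.mem_erase, Finset.mem_univ, and_true] at hj
    have hj2 : j + 1 ≠ m + 1 := fun h => hj.2 (add_right_cancel h)
    rw [hc j hj.1, hrr j hj.1, hc _ hj2, hrr _ hj2]
  rw [rest]
  refine add_lt_add_left ?_ _
  have o1 := hov' m
  have o2 := hov' (m + 1)
  rw [hc m d1, hrr m d1] at o1 ⊢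
  rw [hc _ d2, hrr _ d2] at o2 ⊢
  rw [extAngle_comm (c' (m + 1)), extAngle_comm (c (m + 1))]
  refine disk_step _ _ _ _ _ _ _ _ (hr _) (hr _) (hr _) (hr' _) hin o1
    (by rwa [Set.inter_comm]) ?_ ?_ ?_
  · exact hthin _ _ _ d3 d2 d1
  · intro h
    obtain ⟨x, hx1, hx2⟩ := hov (m - 1)
    rw [sub_add_cancel] at hx2
    have hx3 := ball_subset_closedBall hx2
    have := hthin (m - 1) m (m + 1) (fun h => one_ne (by linear_combination -h)) d1
      (fun h => two_ne (by linear_combination -h))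
    exact (Set.eq_empty_iff_forall_notMem.1 this) x ⟨⟨ball_subset_closedBall hx1, hx3⟩, h hx3⟩
  · intro h
    obtain ⟨x, hx1, hx2⟩ := hov (m + 1 + 1)
    have hx3 := ball_subset_closedBall hx1
    have := hthin (m + 1 + 1 + 1) (m + 1 + 1) (m + 1) (fun h => one_ne (by linear_combination h)) d2
      (fun h => two_ne (by linear_combination h))
    exact (Set.eq_empty_iff_forall_notMem.1 this) x ⟨⟨ball_subset_closedBall hx2, hx3⟩, h hx3⟩

/-- **Proposition (no contained loops).**  Let `n ≥ 3` and let `{Dᵢ}` and `{D̃ᵢ}`,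
`i ∈ ℤ/nℤ`, be thin (no three disks have a common point) closed-disk chains in `ℂ`,
in general position, with `D̃ᵢ` contained in the interior of `Dᵢ`, consecutive disks
overlapping in both chains, and `Dᵢ` meeting `Dⱼ` only when `i = j ± 1`.  Then
`Σᵢ ∠(D̃ᵢ,D̃ᵢ₊₁) < Σᵢ ∠(Dᵢ,Dᵢ₊₁)`; in particular some angle differs. -/
theorem prop_no_contained_loops
    (n : ℕ) [NeZero n] (hn : 3 ≤ n)
    (c c' : ZMod n → ℂ) (r r' : ZMod n → ℝ)
    (hr : ∀ i, 0 < r i) (hr' : ∀ i, 0 < r' i)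
    -- thinness of both collections:
    (hthin : ∀ i j k : ZMod n, i ≠ j → j ≠ k → i ≠ k →
      closedBall (c i) (r i) ∩ closedBall (c j) (r j) ∩ closedBall (c k) (r k) = ∅)
    (hthin' : ∀ i j k : ZMod n, i ≠ j → j ≠ k → i ≠ k →
      closedBall (c' i) (r' i) ∩ closedBall (c' j) (r' j) ∩ closedBall (c' k) (r' k) = ∅)
    -- `D̃ᵢ` is contained in the interior of `Dᵢ`:
    (hin : ∀ i, closedBall (c' i) (r' i) ⊆ ball (c i) (r i))
    -- consecutive disks overlap:
    (hov : ∀ i, (ball (c i) (r i) ∩ ball (c (i + 1)) (r (i + 1))).Nonempty)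
    (hov' : ∀ i, (ball (c' i) (r' i) ∩ ball (c' (i + 1)) (r' (i + 1))).Nonempty)
    -- `Dᵢ` meets `Dⱼ` only when `i = j ± 1`:
    (hmeet : ∀ i j : ZMod n, i ≠ j →
      (closedBall (c i) (r i) ∩ closedBall (c j) (r j)).Nonempty → j = i + 1 ∨ j = i - 1)
    -- general position of the two collections together:
    (hgen : ∀ i j : ZMod n, CircTrans (c i) (r i) (c' j) (r' j)) :
    (∑ i : ZMod n, extAngle (c' i) (r' i) (c' (i + 1)) (r' (i + 1)))
        < (∑ i : ZMod n, extAngle (c i) (r i) (c (i + 1)) (r (i + 1))) ∧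
      ∃ i : ZMod n,
        extAngle (c i) (r i) (c (i + 1)) (r (i + 1))
          ≠ extAngle (c' i) (r' i) (c' (i + 1)) (r' (i + 1)) := by
  classical
  have main : ∀ S : Finset (ZMod n), S = ∅ ∨
      (∑ i : ZMod n, extAngle (if i ∈ S then c' i else c i) (if i ∈ S then r' i else r i)
        (if i + 1 ∈ S then c' (i + 1) else c (i + 1)) (if i + 1 ∈ S then r' (i + 1) else r (i + 1)))
        < (∑ i : ZMod n, extAngle (c i) (r i) (c (i + 1)) (r (i + 1))) := by
    have hsub : ∀ (S : Finset (ZMod n)) i,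
        closedBall (if i ∈ S then c' i else c i) (if i ∈ S then r' i else r i) ⊆
          closedBall (c i) (r i) := by
      intro S i
      split_ifs
      · exact (hin i).trans ball_subset_closedBall
      · exact subset_rfl
    have hsup : ∀ (S : Finset (ZMod n)) i, ball (c' i) (r' i) ⊆
        ball (if i ∈ S then c' i else c i) (if i ∈ S then r' i else r i) := by
      intro S i
      split_ifs
      · exact subset_rfl
      · exact ball_subset_closedBall.trans (hin i)
    have hpos : ∀ (S : Finset (ZMod n)) i, 0 < (if i ∈ S then r' i else r i) := by
      intro S i
      split_ifs
      · exact hr' i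
      · exact hr i
    have hovS : ∀ (S : Finset (ZMod n)) i,
        (ball (if i ∈ S then c' i else c i) (if i ∈ S then r' i else r i) ∩
        ball (if i + 1 ∈ S then c' (i + 1) else c (i + 1))
          (if i + 1 ∈ S then r' (i + 1) else r (i + 1))).Nonempty := fun S i =>
      (hov' i).mono (Set.inter_subset_inter (hsup S i) (hsup S (i + 1)))
    intro S
    induction S using Finset.induction_on with
    | empty => exact Or.inl rfl
    | insert i S hi ih =>
      right
      have step := chain_step n hn (fun i => if i ∈ S then c' i else c i)
        (fun j => if j ∈ insert i S then c' j else c j) (fun i => if i ∈ S then r' i else r i)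
        (fun j => if j ∈ insert i S then r' j else r j) (hpos S) (hpos _)
        (fun i j k h1 h2 h3 => Set.subset_empty_iff.1 (by
          rw [← hthin i j k h1 h2 h3]
          exact Set.inter_subset_inter (Set.inter_subset_inter (hsub S i) (hsub S j)) (hsub S k)))
        (hovS S) (hovS _) i (fun j hj => by simp [hj]) (fun j hj => by simp [hj])
        (by simpa [hi] using hin i)
      rcases ih with rfl | ih
      · simpa using step
      · exact step.trans ih
  have lt : (∑ i : ZMod n, extAngle (c' i) (r' i) (c' (i + 1)) (r' (i + 1)))
        < (∑ i : ZMod n, extAngle (c i) (r i) (c (i + 1)) (r (i + 1))) := by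
    rcases main Finset.univ with h | h
    · exact absurd h Finset.univ_nonempty.ne_empty
    · simpa using h
  refine ⟨lt, ?_⟩
  by_contra hcon
  push Not at hcon
  exact lt.ne (Finset.sum_congr rfl fun i _ => (hcon i).symm)
end
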